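/- arXiv:1111.4655 — 2 statements merged into one kernel-verified Lean document; each statement's English description precedes it below -/
import Mathlib

section
/- Let T > 2π, a = T/(2π) − 1 > 0, b = √2, and B = (b/a)². For each integer n ≥ 1 let τ_n be the unique t > B with a·t − b·√t = n, and define m(z) = ∏_{n≥1} (1 − (z−i)²/τ_n²), an absolutely convergent product (since τ_n ∼ n/a). Then m is an entire function of exponential type at most aπ, and there exists C > 0 such that: (a) |m(x)| ≤ C(1 + |x|) e^{−√2·π·√|x|} for every x ∈ ℝ; (b) |m(iλ_k^+)| ≥ C^{−1} |k|^{−3} e^{−√2·π·√|k|} for every k ∈ ℤ∖{0}; (c) |m(iλ_k^-)| ≥ C^{−1} e^{aπk² − 2√2·π|k|} for every k ∈ ℤ∖{0}. -/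
open Real

/-- The hyperbolic eigenvalue branch `λ_k⁺ = (-(k² - 2ik) + √(k⁴ - 4k²))/2`, with the
principal complex square root. -/
noncomputable def lamP (k : ℤ) : ℂ :=
  (-((k:ℂ)^2 - 2*Complex.I*(k:ℂ)) + ((k:ℂ)^4 - 4*(k:ℂ)^2) ^ ((1:ℂ)/2)) / 2

/-- The parabolic eigenvalue branch `λ_k⁻ = (-(k² - 2ik) - √(k⁴ - 4k²))/2`, with the
principal complex square root. -/
noncomputable def lamM (k : ℤ) : ℂ :=
  (-((k:ℂ)^2 - 2*Complex.I*(k:ℂ)) - ((k:ℂ)^4 - 4*(k:ℂ)^2) ^ ((1:ℂ)/2)) / 2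


/-- Primitive of `v ↦ log |1 - ρ²/v²|`. -/
noncomputable def primM (ρ : ℂ) (v : ℝ) : ℝ :=
  (((v:ℂ) - ρ) * Complex.log ((v:ℂ) - ρ) + ((v:ℂ) + ρ) * Complex.log ((v:ℂ) + ρ)).re
    - 2 * (v * Real.log v)

lemma mulLog_hasDerivAt (ρ : ℂ) (hρ : ρ.im ≠ 0) (v : ℝ) :
    HasDerivAt (fun v : ℝ => (((v:ℂ) + ρ) * Complex.log ((v:ℂ) + ρ)).re)
      (Real.log ‖(v:ℂ) + ρ‖ + 1) v := by
  have hs : ((v:ℂ) + ρ) ∈ Complex.slitPlane := by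
    right; simpa using hρ
  have hne : (v:ℂ) + ρ ≠ 0 := Complex.slitPlane_ne_zero hs
  have h1 : HasDerivAt (fun z : ℂ => (z + ρ) * Complex.log (z + ρ))
      (1 * Complex.log ((v:ℂ) + ρ) + ((v:ℂ) + ρ) * (1 / ((v:ℂ) + ρ))) (v:ℂ) := by
    have h0 : HasDerivAt (fun z : ℂ => z + ρ) 1 (v:ℂ) := (hasDerivAt_id _).add_const ρ
    exact h0.mul (h0.clog hs)
  have h2 := h1.real_of_complex
  convert h2 using 1
  rw [mul_one_div_cancel hne]
  simp [Complex.log_re]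

lemma primM_cont (ρ : ℂ) (hρ : ρ.im ≠ 0) : Continuous (primM ρ) := by
  unfold primM
  simp only [Complex.add_re]
  refine ((Continuous.add ?_ ?_)).sub (continuous_const.mul Real.continuous_mul_log)
  · have : ∀ v : ℝ, ContinuousAt (fun v : ℝ => (((v:ℂ) + -ρ) * Complex.log ((v:ℂ) + -ρ)).re) v :=
      fun v => (mulLog_hasDerivAt (-ρ) (by simpa using hρ) v).continuousAt
    simpa [sub_eq_add_neg] using continuous_iff_continuousAt.2 this
  · exact continuous_iff_continuousAt.2 fun v => (mulLog_hasDerivAt ρ hρ v).continuousAt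

lemma ne_of_im {ρ : ℂ} (hρ : ρ.im ≠ 0) (v : ℝ) : (v:ℂ) + ρ ≠ 0 := by
  intro h
  have := congrArg Complex.im h
  simp at this; exact hρ this

lemma ne_of_im' {ρ : ℂ} (hρ : ρ.im ≠ 0) (v : ℝ) : (v:ℂ) - ρ ≠ 0 := by
  rw [sub_eq_add_neg]; exact ne_of_im (by simpa using hρ) v

lemma primM_hasDerivAt0 (ρ : ℂ) (hρ : ρ.im ≠ 0) (v : ℝ) :
    HasDerivAt (fun v : ℝ => (((v:ℂ) - ρ) * Complex.log ((v:ℂ) - ρ)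
      + ((v:ℂ) + ρ) * Complex.log ((v:ℂ) + ρ)).re)
      (Real.log ‖(v:ℂ)^2 - ρ^2‖ + 2) v := by
  have h1 := mulLog_hasDerivAt (-ρ) (by simpa using hρ) v
  have h2 := mulLog_hasDerivAt ρ hρ v
  have := h1.add h2
  have e : Real.log ‖(v:ℂ)^2 - ρ^2‖ + 2 = Real.log ‖(v:ℂ) + -ρ‖ + 1 + (Real.log ‖(v:ℂ) + ρ‖ + 1) := by
    have : (v:ℂ)^2 - ρ^2 = ((v:ℂ) + -ρ) * ((v:ℂ) + ρ) := by ring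
    rw [this, norm_mul, Real.log_mul]
    · ring
    · exact norm_ne_zero_iff.2 (ne_of_im (by simpa using hρ) v)
    · exact norm_ne_zero_iff.2 (ne_of_im hρ v)
  rw [e]
  refine this.congr_of_eventuallyEq (Filter.Eventually.of_forall fun x => ?_)
  simp [sub_eq_add_neg]

lemma primM_hasDerivAt (ρ : ℂ) (hρ : ρ.im ≠ 0) (v : ℝ) (hv : 0 < v) :
    HasDerivAt (primM ρ) (Real.log ‖1 - ρ^2 / (v:ℂ)^2‖) v := by
  have h1 := primM_hasDerivAt0 ρ hρ v
  have h2 := (Real.hasDerivAt_mul_log hv.ne').const_mul 2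
  have h3 := h1.sub h2
  have e : Real.log ‖1 - ρ^2 / (v:ℂ)^2‖ = Real.log ‖(v:ℂ)^2 - ρ^2‖ + 2 - 2 * (Real.log v + 1) := by
    have hv' : (v:ℂ) ≠ 0 := by exact_mod_cast hv.ne'
    have : 1 - ρ^2 / (v:ℂ)^2 = ((v:ℂ)^2 - ρ^2) / (v:ℂ)^2 := by field_simp
    rw [this, norm_div, Real.log_div, norm_pow, Real.log_pow]
    · simp [abs_of_pos hv]; ring
    · rw [sq_sub_sq]
      exact norm_ne_zero_iff.2 (mul_ne_zero (ne_of_im hρ v) (ne_of_im' hρ v))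
    · simpa using hv.ne'
  rw [e]
  exact h3

lemma primM_zero (ρ : ℂ) (hρ : ρ.im ≠ 0) : primM ρ 0 = - (π * |ρ.im|) := by
  unfold primM
  have hne : ρ ≠ 0 := by rintro rfl; simp at hρ
  simp only [Complex.ofReal_zero, zero_sub, zero_add, zero_mul, mul_zero, sub_zero]
  have key : -ρ * Complex.log (-ρ) + ρ * Complex.log ρ = ρ * (Complex.log ρ - Complex.log (-ρ)) := by ring
  rw [key]
  have : Complex.log ρ - Complex.log (-ρ) = ((Complex.arg ρ - Complex.arg (-ρ) : ℝ):ℂ) * Complex.I := by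
    simp [Complex.log]; ring
  rw [this]
  rcases lt_or_gt_of_ne hρ with h | h
  · rw [Complex.arg_neg_eq_arg_add_pi_of_im_neg h, abs_of_neg h]
    simp; ring
  · rw [Complex.arg_neg_eq_arg_sub_pi_of_im_pos h, abs_of_pos h]
    simp; ring

lemma primM_tendsto (ρ : ℂ) : Filter.Tendsto (primM ρ) Filter.atTop (nhds 0) := by
  have hg : ∀ ρ : ℂ, Filter.Tendsto (fun v : ℝ => (v:ℂ) * (ρ / v)) Filter.atTop (nhds ρ) := by
    intro ρ
    refine tendsto_const_nhds.congr' ?_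
    filter_upwards [Filter.eventually_gt_atTop 0] with v hv
    have hv' : (v:ℂ) ≠ 0 := by exact_mod_cast hv.ne'
    field_simp
  have hl : ∀ ρ : ℂ, Filter.Tendsto (fun v : ℝ => (v:ℂ) * Complex.log (1 + ρ / v)) Filter.atTop (nhds ρ) :=
    fun ρ => Complex.tendsto_mul_log_one_add_of_tendsto (hg ρ)
  have h0 : ∀ ρ : ℂ, Filter.Tendsto (fun v : ℝ => Complex.log (1 + ρ / v)) Filter.atTop (nhds 0) := by
    intro ρ
    have hr : Filter.Tendsto (fun v : ℝ => ((v⁻¹ : ℝ) : ℂ)) Filter.atTop (nhds 0) := by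
      have := (Complex.continuous_ofReal.tendsto 0).comp tendsto_inv_atTop_zero
      simpa [Function.comp_def] using this
    have := hr.mul (hl ρ)
    rw [zero_mul] at this
    refine this.congr' ?_
    filter_upwards [Filter.eventually_gt_atTop 0] with v hv
    have hv' : (v:ℂ) ≠ 0 := by exact_mod_cast hv.ne'
    push_cast
    field_simp
  have hs := (((hl (-ρ)).add (hl ρ)).add (((h0 ρ).const_mul ρ).add ((h0 (-ρ)).const_mul (-ρ))))
  have hs' := (Complex.continuous_re.tendsto _).comp hs
  simp only [mul_zero, add_zero, neg_add_cancel, Complex.zero_re] at hs'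
  refine hs'.congr' ?_
  filter_upwards [Filter.eventually_gt_atTop ‖ρ‖] with v hv
  have hv0 : 0 < v := (norm_nonneg _).trans_lt hv
  have hv' : (v:ℂ) ≠ 0 := by exact_mod_cast hv0.ne'
  have hlog : ∀ ρ : ℂ, ‖ρ‖ < v → Complex.log (v + ρ) = Real.log v + Complex.log (1 + ρ / v) := by
    intro ρ hρ
    rw [← Complex.log_ofReal_mul hv0]
    · congr 1; field_simp
    · intro h
      have : (v:ℂ) + ρ = 0 := by
        have := congrArg (fun z => (v:ℂ) * z) h
        simp only [mul_add, mul_one, mul_zero] at this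
        rwa [mul_div_cancel₀ _ hv'] at this
      have h3 : ρ = -(v:ℂ) := by linear_combination this
      rw [h3] at hρ
      simp [abs_of_pos hv0] at hρ
  unfold primM
  have e1 := hlog ρ hv
  have e2 := hlog (-ρ) (by simpa using hv)
  rw [sub_eq_add_neg (v:ℂ) ρ, e1, e2]
  simp only [Function.comp]
  have : ((v:ℂ) + -ρ) * ((Real.log v : ℂ) + Complex.log (1 + -ρ / v)) + ((v:ℂ) + ρ) * ((Real.log v:ℂ) + Complex.log (1 + ρ / v))
     = (v * Complex.log (1 + -ρ / v) + v * Complex.log (1 + ρ / v) + (ρ * Complex.log (1 + ρ / v) + -ρ * Complex.log (1 + -ρ / v))) + ((2 * (v * Real.log v) : ℝ):ℂ) := by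
    push_cast; ring
  rw [this, Complex.add_re _ ((2 * (v * Real.log v) : ℝ):ℂ), Complex.ofReal_re]; ring

/-- near zero estimate -/
lemma primM_near (ρ : ℂ) (hρ : ρ.im ≠ 0) (v : ℝ) (hv : 0 < v) (hb : 2 * v ≤ ‖ρ‖) :
    |primM ρ v - primM ρ 0 - 2 * v * Real.log ‖ρ‖| ≤ 4 * v + |2 * (v * Real.log v)| := by
  have hn : 0 < ‖ρ‖ := by linarith
  let f : ℝ → ℝ := fun v => (((v:ℂ) - ρ) * Complex.log ((v:ℂ) - ρ)
      + ((v:ℂ) + ρ) * Complex.log ((v:ℂ) + ρ)).re - v * (2 * Real.log ‖ρ‖)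
  have hd : ∀ x : ℝ, HasDerivAt f (Real.log ‖(x:ℂ)^2 - ρ^2‖ + 2 - 1 * (2 * Real.log ‖ρ‖)) x := fun x =>
    (primM_hasDerivAt0 ρ hρ x).sub ((hasDerivAt_id x).mul_const _)
  have hbd : ∀ x ∈ Set.Ico 0 v, ‖Real.log ‖(x:ℂ)^2 - ρ^2‖ + 2 - 1 * (2 * Real.log ‖ρ‖)‖ ≤ 4 := by
    intro x hx
    have hx2 : x^2 ≤ ‖ρ‖^2 / 4 := by nlinarith [hx.1, hx.2]
    have hn2 : ‖(x:ℂ)^2‖ = x^2 := by simp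
    have lo : ‖ρ‖^2 * (3/4) ≤ ‖(x:ℂ)^2 - ρ^2‖ := by
      have := norm_sub_norm_le (ρ^2) ((x:ℂ)^2)
      rw [norm_sub_rev, hn2, norm_pow] at this; linarith
    have hi : ‖(x:ℂ)^2 - ρ^2‖ ≤ ‖ρ‖^2 * (5/4) := by
      have := norm_sub_le ((x:ℂ)^2) (ρ^2)
      rw [hn2, norm_pow] at this; linarith
    have hp : 0 < ‖ρ‖^2 := by positivity
    have l1 := Real.log_le_log (by positivity) lo
    have l2 := Real.log_le_log (by nlinarith) hi
    rw [Real.log_mul hp.ne' (by norm_num), Real.log_pow] at l1 l2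
    have l3 : Real.log (5/4) ≤ 1/4 := by
      have := Real.log_le_sub_one_of_pos (show (0:ℝ) < 5/4 by norm_num); linarith
    have l4 : -(1/3) ≤ Real.log (3/4) := by
      have := Real.one_sub_inv_le_log_of_pos (show (0:ℝ) < 3/4 by norm_num); norm_num at this; linarith
    push_cast at l1 l2
    rw [Real.norm_eq_abs, abs_le]; constructor <;> linarith
  have := norm_image_sub_le_of_norm_deriv_le_segment' (f := f) (a := 0) (b := v) (C := 4)
    (fun x _ => (hd x).hasDerivWithinAt) hbd v ⟨hv.le, le_rfl⟩
  rw [Real.norm_eq_abs] at this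
  have e : primM ρ v - primM ρ 0 - 2 * v * Real.log ‖ρ‖ = (f v - f 0) - 2 * (v * Real.log v) := by
    simp only [primM, f, Complex.ofReal_zero]; ring
  rw [e]
  refine (abs_sub _ _).trans ?_
  linarith


lemma le_of_sq_le' {x y : ℝ} (h : x^2 ≤ y^2) (hy : 0 ≤ y) : x ≤ y := le_of_abs_le (abs_le_of_sq_le_sq h hy)

noncomputable def PhiF (a : ℝ) (w σ : ℂ) (t : ℝ) : ℝ :=
  a * primM w t - √2 * (primM σ (√t) + primM (Complex.I * σ) (√t))

lemma sig_im {w σ : ℂ} (h : σ^2 = w) (hw : w.im ≠ 0) : σ.im ≠ 0 := by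
  rintro h0; apply hw; rw [← h, sq, Complex.mul_im, h0]; ring

lemma sig_im' {w σ : ℂ} (h : σ^2 = w) (hw : w.im ≠ 0) : (Complex.I * σ).im ≠ 0 := by
  intro h0; apply hw
  have h1 : σ.re = 0 := by simpa using h0
  rw [← h, sq, Complex.mul_im, h1]; ring

lemma Phi_zero (a : ℝ) {w σ : ℂ} (h : σ^2 = w) (hw : w.im ≠ 0) :
    PhiF a w σ 0 = -(a * π * |w.im|) + √2 * π * √(‖w‖ + |w.im|) := by
  unfold PhiF
  rw [Real.sqrt_zero, primM_zero _ hw, primM_zero _ (sig_im h hw), primM_zero _ (sig_im' h hw)]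
  have : √(‖w‖ + |w.im|) = |σ.im| + |(Complex.I * σ).im| := by
    rw [Real.sqrt_eq_iff_mul_self_eq (by positivity) (by positivity)]
    have e1 : ‖w‖ = σ.re^2 + σ.im^2 := by
      rw [← h, norm_pow, Complex.sq_norm, Complex.normSq_apply]; ring
    have e2 : |w.im| = 2 * (|σ.re| * |σ.im|) := by
      rw [← h, sq, Complex.mul_im, ← abs_mul, show σ.re * σ.im + σ.im * σ.re = 2 * (σ.re * σ.im) by ring,
        abs_mul]; simp
    have e3 : |(Complex.I * σ).im| = |σ.re| := by simp
    rw [e1, e2, e3, ← sq_abs σ.re, ← sq_abs σ.im]; ring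
  rw [this]; ring

lemma Phi_tendsto (a : ℝ) (w σ : ℂ) : Filter.Tendsto (PhiF a w σ) Filter.atTop (nhds 0) := by
  have h1 := (primM_tendsto w).const_mul a
  have h2 := (primM_tendsto σ).comp Real.tendsto_sqrt_atTop
  have h3 := (primM_tendsto (Complex.I * σ)).comp Real.tendsto_sqrt_atTop
  have h4 := h1.sub ((h2.add h3).const_mul (√2))
  simp only [mul_zero, add_zero, sub_zero] at h4
  exact h4

lemma one_sub_ne {w : ℂ} (hw : w.im ≠ 0) (t : ℝ) (ht : 0 < t) : 1 - w^2 / (t:ℂ)^2 ≠ 0 := by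
  have ht' : (t:ℂ) ≠ 0 := by exact_mod_cast ht.ne'
  have : 1 - w^2 / (t:ℂ)^2 = ((t:ℂ) + w) * ((t:ℂ) - w) / (t:ℂ)^2 := by field_simp; ring
  rw [this]
  exact div_ne_zero (mul_ne_zero (ne_of_im hw t) (ne_of_im' hw t)) (pow_ne_zero _ ht')

lemma Phi_hasDerivAt (a : ℝ) {w σ : ℂ} (h : σ^2 = w) (hw : w.im ≠ 0) (t : ℝ) (ht : 0 < t) :
    HasDerivAt (PhiF a w σ) ((a - √2 * (1 / (2 * √t))) * Real.log ‖1 - w^2 / (t:ℂ)^2‖) t := by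
  have hs : 0 < √t := Real.sqrt_pos.2 ht
  have hsq := Real.hasDerivAt_sqrt ht.ne'
  have h1 := (primM_hasDerivAt w hw t ht).const_mul a
  have h2 := (primM_hasDerivAt σ (sig_im h hw) (√t) hs).comp t hsq
  have h3 := (primM_hasDerivAt (Complex.I * σ) (sig_im' h hw) (√t) hs).comp t hsq
  have h4 := h1.sub ((h2.add h3).const_mul (√2))
  have e0 : ((√t : ℝ) : ℂ)^2 = (t:ℂ) := by rw [← Complex.ofReal_pow, Real.sq_sqrt ht.le]
  have ht' : (t:ℂ) ≠ 0 := by exact_mod_cast ht.ne'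
  have hn := one_sub_ne hw t ht
  have hf : 1 - w^2 / (t:ℂ)^2 = (1 - w / t) * (1 + w / t) := by field_simp; ring
  have ea : 1 - σ^2 / ((√t : ℝ) : ℂ)^2 = 1 - w / t := by rw [e0, h]
  have eb : 1 - (Complex.I * σ)^2 / ((√t : ℝ) : ℂ)^2 = 1 + w / t := by
    rw [e0, mul_pow, h, Complex.I_sq]; ring
  rw [ea, eb] at h4
  rw [hf] at hn h4 ⊢
  refine h4.congr_deriv ?_
  rw [norm_mul, Real.log_mul (norm_ne_zero_iff.2 (left_ne_zero_of_mul hn))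
    (norm_ne_zero_iff.2 (right_ne_zero_of_mul hn))]
  ring

lemma Phi_near (a t : ℝ) (ha : 0 < a) (ht : 0 < t) : ∃ C : ℝ, 0 < C ∧ ∀ w σ : ℂ, σ^2 = w → w.im ≠ 0 →
    4 * t ≤ ‖w‖ →
    |PhiF a w σ t - PhiF a w σ 0 - 2 * (a * t - √2 * √t) * Real.log ‖w‖| ≤ C := by
  have hs : 0 < √t := Real.sqrt_pos.2 ht
  refine ⟨a * (4 * t + |2 * (t * Real.log t)|) + √2 * ((4 * √t + |2 * (√t * Real.log (√t))|) +
    (4 * √t + |2 * (√t * Real.log (√t))|)), by positivity, ?_⟩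
  intro w σ h hw hb
  have hns : ‖σ‖^2 = ‖w‖ := by rw [← h, norm_pow]
  have hσ : 2 * √t ≤ ‖σ‖ := by
    refine le_of_sq_le' ?_ (norm_nonneg _)
    rw [hns, mul_pow, Real.sq_sqrt ht.le]; linarith
  have hl : Real.log ‖w‖ = 2 * Real.log ‖σ‖ := by rw [← hns, Real.log_pow]; simp
  have n1 := primM_near w hw t ht (by linarith)
  have n2 := primM_near σ (sig_im h hw) (√t) hs hσ
  have n3 := primM_near (Complex.I * σ) (sig_im' h hw) (√t) hs (by simpa using hσ)
  have hI : ‖Complex.I * σ‖ = ‖σ‖ := by simp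
  rw [hI] at n3
  set e1 := primM w t - primM w 0 - 2 * t * Real.log ‖w‖
  set e2 := primM σ (√t) - primM σ 0 - 2 * √t * Real.log ‖σ‖
  set e3 := primM (Complex.I * σ) (√t) - primM (Complex.I * σ) 0 - 2 * √t * Real.log ‖σ‖
  have e : PhiF a w σ t - PhiF a w σ 0 - 2 * (a * t - √2 * √t) * Real.log ‖w‖ =
      a * e1 - √2 * (e2 + e3) := by
    simp only [e1, e2, e3, PhiF, Real.sqrt_zero]; rw [hl]; ring
  rw [e]
  refine (abs_sub _ _).trans ?_
  rw [abs_mul, abs_mul, abs_of_pos ha, abs_of_pos (show 0 < √2 by positivity)]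
  have := abs_add_le e2 e3
  gcongr
  linarith

lemma nu_deriv_pos (a : ℝ) (ha : 0 < a) (t : ℝ) (ht : (√2 / a)^2 < t) :
    0 < a - √2 * (1 / (2 * √t)) := by
  have h2 : 0 < √2 := by positivity
  have hb : √2 / a < √t := Real.lt_sqrt_of_sq_lt ht
  rw [div_lt_iff₀ ha] at hb
  have hs : 0 < √t := by nlinarith [Real.sqrt_nonneg t]
  have : √2 * (1 / (2 * √t)) = √2 / (2 * √t) := by ring
  rw [this, sub_pos, div_lt_iff₀ (by positivity)]
  nlinarith

lemma Phi_step (a : ℝ) (ha : 0 < a) {w σ : ℂ} (h : σ^2 = w) (hw : w.im ≠ 0) (s t : ℝ)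
    (hs : (√2 / a)^2 ≤ s) (hst : s < t) (hnu : (a * t - √2 * √t) - (a * s - √2 * √s) = 1) :
    ∃ ξ, s < ξ ∧ ξ < t ∧ PhiF a w σ t - PhiF a w σ s = Real.log ‖1 - w^2 / (ξ:ℂ)^2‖ := by
  have h0 : 0 < s := lt_of_lt_of_le (by positivity) hs
  have hd : ∀ x, s ≤ x → HasDerivAt (fun t => a * t - √2 * √t) (a * 1 - √2 * (1 / (2 * √x))) x := by
    intro x hx
    exact ((hasDerivAt_id x).const_mul a).sub ((Real.hasDerivAt_sqrt (by linarith)).const_mul (√2))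
  have hp : ∀ x, s ≤ x → HasDerivAt (PhiF a w σ) ((a - √2 * (1 / (2 * √x))) * Real.log ‖1 - w^2 / (x:ℂ)^2‖) x :=
    fun x hx => Phi_hasDerivAt a h hw x (by linarith)
  obtain ⟨ξ, hξ, e⟩ := exists_ratio_hasDerivAt_eq_ratio_slope (PhiF a w σ) _ hst
    (fun x hx => (hp x hx.1).continuousAt.continuousWithinAt)
    (fun x hx => hp x hx.1.le) (fun t => a * t - √2 * √t) _
    (fun x hx => (hd x hx.1).continuousAt.continuousWithinAt)
    (fun x hx => hd x hx.1.le)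
  refine ⟨ξ, hξ.1, hξ.2, ?_⟩
  have hpos := nu_deriv_pos a ha ξ (lt_of_le_of_lt hs hξ.1)
  rw [hnu] at e
  rw [mul_one, one_mul, mul_comm (a - _)] at e
  exact (mul_right_cancel₀ hpos.ne' e).symm

lemma normsq_eq (w : ℂ) (t : ℝ) :
    ‖1 - w^2 / (t:ℂ)^2‖^2 = 1 - 2 * (w^2).re * (1/t^2) + ‖w^2‖^2 * (1/t^2)^2 := by
  have : 1 - w^2 / (t:ℂ)^2 = 1 - w^2 * ((1/t^2 : ℝ):ℂ) := by push_cast; ring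
  rw [this, Complex.sq_norm, Complex.sq_norm, Complex.normSq_apply, Complex.normSq_apply]
  simp only [Complex.sub_re, Complex.sub_im, Complex.re_mul_ofReal, Complex.im_mul_ofReal,
    Complex.one_re, Complex.one_im]
  ring

lemma g_anti (w : ℂ) (s t : ℝ) (hs : 0 < s) (hst : s ≤ t) (h : (w^2).re * t^2 ≤ ‖w^2‖^2) :
    ‖1 - w^2 / (t:ℂ)^2‖ ≤ ‖1 - w^2 / (s:ℂ)^2‖ := by
  refine le_of_sq_le' ?_ (norm_nonneg _)
  rw [normsq_eq, normsq_eq]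
  have ht : 0 < t := by linarith
  have hu : 1/t^2 ≤ 1/s^2 := by gcongr
  have hp : (w^2).re ≤ ‖w^2‖^2 * (1/t^2) := by
    rw [mul_one_div, le_div_iff₀ (by positivity)]; exact h
  have hu0 : 0 < 1/t^2 := by positivity
  set u := 1/t^2
  set v := 1/s^2
  have h3 : ‖w^2‖^2 * u ≤ ‖w^2‖^2 * v := by gcongr
  nlinarith [mul_nonneg (sub_nonneg.2 hu) (show 0 ≤ ‖w^2‖^2 * v + ‖w^2‖^2 * u - 2 * (w^2).re by linarith)]

lemma g_mono (w : ℂ) (s t : ℝ) (hs : 0 < s) (hst : s ≤ t) (h : ‖w^2‖^2 ≤ (w^2).re * s^2) :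
    ‖1 - w^2 / (s:ℂ)^2‖ ≤ ‖1 - w^2 / (t:ℂ)^2‖ := by
  refine le_of_sq_le' ?_ (norm_nonneg _)
  rw [normsq_eq, normsq_eq]
  have ht : 0 < t := by linarith
  have hu : 1/t^2 ≤ 1/s^2 := by gcongr
  have hp : ‖w^2‖^2 * (1/s^2) ≤ (w^2).re := by
    rw [mul_one_div, div_le_iff₀ (by positivity)]; exact h
  have hu0 : 0 < 1/t^2 := by positivity
  set u := 1/t^2
  set v := 1/s^2
  have h3 : ‖w^2‖^2 * u ≤ ‖w^2‖^2 * v := by gcongr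
  nlinarith [mul_nonneg (sub_nonneg.2 hu) (show 0 ≤ 2 * (w^2).re - ‖w^2‖^2 * v - ‖w^2‖^2 * u by linarith)]

lemma g_min (w : ℂ) (hw : w ≠ 0) (t : ℝ) : |(w^2).im| / ‖w^2‖ ≤ ‖1 - w^2 / (t:ℂ)^2‖ := by
  refine le_of_sq_le' ?_ (norm_nonneg _)
  rw [normsq_eq, div_pow, sq_abs]
  have hR : 0 < ‖w^2‖^2 := pow_pos (norm_pos_iff.2 (pow_ne_zero 2 hw)) 2
  have e : ‖w^2‖^2 = (w^2).re^2 + (w^2).im^2 := by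
    rw [Complex.sq_norm, Complex.normSq_apply]; ring
  rw [div_le_iff₀ hR]
  set u := 1/t^2
  nlinarith [sq_nonneg (‖w^2‖^2 * u - (w^2).re)]

lemma disc_upper (G d : ℕ → ℝ) (μ : ℝ) (j : ℕ) (h1 : ∀ n < j, G (n+1) ≤ d n)
    (h2 : ∀ n > j, G n ≤ d n) (h3 : μ ≤ d j) (N : ℕ) (hN : j ≤ N) :
    ∑ n ∈ Finset.range N, G (n+1) ≤ ∑ n ∈ Finset.range (N+1), d n - μ := by
  induction N, hN using Nat.le_induction with
  | base =>
    rw [Finset.sum_range_succ]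
    have := Finset.sum_le_sum (s := Finset.range j) (fun n hn => h1 n (Finset.mem_range.1 hn))
    linarith
  | succ N hN ih =>
    rw [Finset.sum_range_succ, Finset.sum_range_succ _ (N+1)]
    have := h2 (N+1) (by omega)
    linarith

lemma disc_lower (G d : ℕ → ℝ) (μ : ℝ) (j : ℕ) (h1 : ∀ n < j, d n ≤ G n)
    (h2 : ∀ n > j, d n ≤ G (n+1)) (h3 : d j ≤ max (G j) (G (j+1))) (hμ : ∀ n, μ ≤ G n)
    (N : ℕ) (hN : j + 1 ≤ N) :
    ∑ n ∈ Finset.range N, d n - d 0 + μ ≤ ∑ n ∈ Finset.range N, G (n+1) := by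
  induction N, hN using Nat.le_induction with
  | base =>
    cases j with
    | zero => simpa using hμ 1
    | succ i =>
      rw [Finset.sum_range_succ' d, Finset.sum_range_succ _ (i+1), Finset.sum_range_succ _ i,
        Finset.sum_range_succ _ i]
      have := Finset.sum_le_sum (s := Finset.range i)
        (fun n hn => h1 (n+1) (by have := Finset.mem_range.1 hn; omega))
      rcases max_cases (G (i+1)) (G (i+1+1)) with h | h
      · have := hμ (i+1+1); linarith
      · have := hμ (i+1); linarith
  | succ N hN ih =>
    rw [Finset.sum_range_succ, Finset.sum_range_succ _ N]
    have := h2 N (by omega)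
    linarith

/-- Data: zeros sequence with `t 0 = B`. -/
structure ZSeq (a : ℝ) (t : ℕ → ℝ) : Prop where
  ha : 0 < a
  h0 : t 0 = (√2 / a)^2
  mono : StrictMono t
  nu : ∀ n, a * t n - √2 * √(t n) = n

namespace ZSeq
variable {a : ℝ} {t : ℕ → ℝ}

lemma B_le (Z : ZSeq a t) (n : ℕ) : (√2 / a)^2 ≤ t n := by
  rw [← Z.h0]; exact Z.mono.monotone (Nat.zero_le n)

lemma pos (Z : ZSeq a t) (n : ℕ) : 0 < t n :=
  lt_of_lt_of_le (by have := Z.ha; positivity) (Z.B_le n)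

lemma ge (Z : ZSeq a t) (n : ℕ) : (n:ℝ) / a ≤ t n := by
  rw [div_le_iff₀ Z.ha]
  have := Z.nu n
  have : 0 ≤ √2 * √(t n) := by positivity
  linarith

lemma tendsto (Z : ZSeq a t) : Filter.Tendsto t Filter.atTop Filter.atTop :=
  Filter.tendsto_atTop_mono Z.ge (tendsto_natCast_atTop_atTop.atTop_div_const Z.ha)

lemma exists_xi (Z : ZSeq a t) {w σ : ℂ} (h : σ^2 = w) (hw : w.im ≠ 0) (n : ℕ) :
    ∃ ξ, t n < ξ ∧ ξ < t (n+1) ∧ PhiF a w σ (t (n+1)) - PhiF a w σ (t n) = Real.log ‖1 - w^2 / (ξ:ℂ)^2‖ := by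
  refine Phi_step a Z.ha h hw _ _ (Z.B_le n) (Z.mono (Nat.lt_succ_self n)) ?_
  rw [Z.nu, Z.nu]; push_cast; ring

lemma prod_eq (Z : ZSeq a t) {w : ℂ} (hw : w.im ≠ 0) (N : ℕ) :
    ‖∏ n ∈ Finset.range N, (1 - w^2 / ((t (n+1):ℝ):ℂ)^2)‖
      = Real.exp (∑ n ∈ Finset.range N, Real.log ‖1 - w^2 / ((t (n+1):ℝ):ℂ)^2‖) := by
  rw [Real.exp_sum, norm_prod]
  refine Finset.prod_congr rfl fun n _ => ?_
  rw [Real.exp_log (norm_pos_iff.2 (one_sub_ne hw _ (Z.pos _)))]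

lemma sum_d (w σ : ℂ) (N : ℕ) : ∑ n ∈ Finset.range N, (PhiF a w σ (t (n+1)) - PhiF a w σ (t n))
    = PhiF a w σ (t N) - PhiF a w σ (t 0) := Finset.sum_range_sub (fun n => PhiF a w σ (t n)) N

lemma log_mono {w : ℂ} (hw : w.im ≠ 0) {s u : ℝ} (hs : 0 < s)
    (h : ‖1 - w^2 / (s:ℂ)^2‖ ≤ ‖1 - w^2 / (u:ℂ)^2‖) :
    Real.log ‖1 - w^2 / (s:ℂ)^2‖ ≤ Real.log ‖1 - w^2 / (u:ℂ)^2‖ :=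
  Real.log_le_log (norm_pos_iff.2 (one_sub_ne hw _ hs)) h

/-- two-sided bounds for p > 0 -/
lemma bounds (Z : ZSeq a t) {w σ : ℂ} (h : σ^2 = w) (hw : w.im ≠ 0) (hp : 0 < (w^2).re)
    (hB : t 0 ≤ ‖w‖) (L : ℂ)
    (hL : Filter.Tendsto (fun N => ∏ n ∈ Finset.range N, (1 - w^2 / ((t (n+1):ℝ):ℂ)^2)) Filter.atTop (nhds L)) :
    ‖L‖ ≤ Real.exp (-PhiF a w σ (t 0) - Real.log (|(w^2).im| / ‖w^2‖)) ∧
    Real.exp (-PhiF a w σ (t 1) + Real.log (|(w^2).im| / ‖w^2‖)) ≤ ‖L‖ := by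
  have hw0 : w ≠ 0 := by rintro rfl; simp at hw
  have him : 0 < |(w^2).im| / ‖w^2‖ := by
    have : (w^2).im ≠ 0 := by
      rw [sq, Complex.mul_im]
      have h1 : w.re ≠ 0 := by
        intro h0; rw [sq, Complex.mul_re, h0] at hp; nlinarith [mul_self_nonneg w.im]
      rw [show w.re * w.im + w.im * w.re = 2 * (w.re * w.im) by ring]
      exact mul_ne_zero two_ne_zero (mul_ne_zero h1 hw)
    exact div_pos (abs_pos.2 this) (norm_pos_iff.2 (pow_ne_zero 2 hw0))
  set μ := Real.log (|(w^2).im| / ‖w^2‖) with hμd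
  choose ξ hξ1 hξ2 hξ using Z.exists_xi h hw
  have hξ0 : ∀ n, 0 < ξ n := fun n => (Z.pos n).trans (hξ1 n)
  set G : ℕ → ℝ := fun n => Real.log ‖1 - w^2 / ((t n:ℝ):ℂ)^2‖ with hG
  set d : ℕ → ℝ := fun n => PhiF a w σ (t (n+1)) - PhiF a w σ (t n) with hd
  have hμ : ∀ s : ℝ, μ ≤ Real.log ‖1 - w^2 / (s:ℂ)^2‖ := fun s => Real.log_le_log him (g_min w hw0 s)
  have hex : ∃ n, ‖w^2‖^2 < (w^2).re * (t n)^2 := by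
    have : Filter.Tendsto (fun n => (w^2).re * (t n)^2) Filter.atTop Filter.atTop :=
      ((Filter.tendsto_pow_atTop two_ne_zero).comp Z.tendsto).const_mul_atTop hp
    exact (this.eventually_gt_atTop _).exists
  classical
  obtain ⟨j, hj⟩ : ∃ j, Nat.find hex = j + 1 := by
    refine Nat.exists_eq_succ_of_ne_zero ?_
    intro h0
    have := Nat.find_spec hex
    rw [h0] at this
    have h1 : (w^2).re ≤ ‖w^2‖ := Complex.re_le_norm _
    have h2 : (t 0)^2 ≤ ‖w^2‖ := by rw [norm_pow]; exact pow_le_pow_left₀ (Z.pos 0).le hB 2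
    have : (w^2).re * (t 0)^2 ≤ ‖w^2‖ * ‖w^2‖ := by gcongr
    nlinarith
  have hle : ∀ n ≤ j, (w^2).re * (t n)^2 ≤ ‖w^2‖^2 := fun n hn =>
    not_lt.1 (Nat.find_min hex (by omega))
  have hgt : ∀ n, j + 1 ≤ n → ‖w^2‖^2 ≤ (w^2).re * (t n)^2 := by
    intro n hn
    have h1 := Nat.find_spec hex
    rw [hj] at h1
    have h2 : t (j+1) ≤ t n := Z.mono.monotone hn
    have h3 := (Z.pos (j+1)).le
    calc _ ≤ (w^2).re * (t (j+1))^2 := h1.le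
      _ ≤ _ := by gcongr
  have a1 : ∀ n < j, G (n+1) ≤ d n := by
    intro n hn
    simp only [hG, hd]; rw [hξ n]
    exact log_mono hw (Z.pos _) (g_anti w _ _ (hξ0 n) (hξ2 n).le (hle _ hn))
  have a2 : ∀ n > j, G n ≤ d n := by
    intro n hn
    simp only [hG, hd]; rw [hξ n]
    exact log_mono hw (Z.pos _) (g_mono w _ _ (Z.pos n) (hξ1 n).le (hgt _ hn))
  have a3 : ∀ n < j, d n ≤ G n := by
    intro n hn
    simp only [hG, hd]; rw [hξ n]
    refine log_mono hw (hξ0 _) (g_anti w _ _ (Z.pos n) (hξ1 n).le ((le_trans ?_ (hle _ hn))))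
    have := hξ2 n
    have := hξ0 n
    show (w^2).re * (ξ n)^2 ≤ (w^2).re * (t (n+1))^2
    gcongr
  have a4 : ∀ n > j, d n ≤ G (n+1) := by
    intro n hn
    simp only [hG, hd]; rw [hξ n]
    refine log_mono hw (hξ0 _) (g_mono w _ _ (hξ0 n) (hξ2 n).le ((hgt n hn).trans ?_))
    have := hξ1 n
    have := Z.pos n
    gcongr
  have a5 : d j ≤ max (G j) (G (j+1)) := by
    simp only [hG, hd]; rw [hξ j]
    rcases le_total ((w^2).re * (ξ j)^2) (‖w^2‖^2) with hc | hc
    · exact le_max_of_le_left (log_mono hw (hξ0 _) (g_anti w _ _ (Z.pos j) (hξ1 j).le hc))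
    · exact le_max_of_le_right (log_mono hw (hξ0 _) (g_mono w _ _ (hξ0 j) (hξ2 j).le hc))
  have a6 : μ ≤ d j := by simp only [hd]; rw [hξ j]; exact hμ _
  have hPhi : Filter.Tendsto (fun N => PhiF a w σ (t N)) Filter.atTop (nhds 0) :=
    (Phi_tendsto a w σ).comp Z.tendsto
  constructor
  · have hlim : Filter.Tendsto (fun N => Real.exp (PhiF a w σ (t (N+1)) - PhiF a w σ (t 0) - μ)) Filter.atTop
        (nhds (Real.exp (0 - PhiF a w σ (t 0) - μ))) :=
      (Real.continuous_exp.tendsto _).comp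
        (((hPhi.comp (Filter.tendsto_add_atTop_nat 1)).sub_const _).sub_const _)
    rw [zero_sub] at hlim
    refine le_of_tendsto_of_tendsto hL.norm hlim ?_
    filter_upwards [Filter.eventually_ge_atTop j] with N hN
    rw [Z.prod_eq hw, Real.exp_le_exp]
    have := disc_upper G d μ j a1 a2 a6 N hN
    rw [show ∑ n ∈ Finset.range (N+1), d n = _ from sum_d w σ (N+1)] at this
    exact this
  · have hlim : Filter.Tendsto (fun N => Real.exp (PhiF a w σ (t N) - PhiF a w σ (t 1) + μ)) Filter.atTop
        (nhds (Real.exp (0 - PhiF a w σ (t 1) + μ))) :=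
      (Real.continuous_exp.tendsto _).comp ((hPhi.sub_const _).add_const _)
    rw [zero_sub] at hlim
    refine le_of_tendsto_of_tendsto hlim hL.norm ?_
    filter_upwards [Filter.eventually_ge_atTop (j+1)] with N hN
    rw [Z.prod_eq hw, Real.exp_le_exp]
    have := disc_lower G d μ j a3 a4 a5 (fun n => hμ _) N hN
    rw [show ∑ n ∈ Finset.range N, d n = _ from sum_d w σ N] at this
    have e : d 0 = PhiF a w σ (t 1) - PhiF a w σ (t 0) := rfl
    rw [e] at this
    refine le_trans (le_of_eq ?_) this
    ring

/-- lower bound for p ≤ 0 -/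
lemma bounds' (Z : ZSeq a t) {w σ : ℂ} (h : σ^2 = w) (hw : w.im ≠ 0) (hp : (w^2).re ≤ 0) (L : ℂ)
    (hL : Filter.Tendsto (fun N => ∏ n ∈ Finset.range N, (1 - w^2 / ((t (n+1):ℝ):ℂ)^2)) Filter.atTop (nhds L)) :
    Real.exp (-PhiF a w σ (t 1)) ≤ ‖L‖ := by
  have hPhi : Filter.Tendsto (fun N => PhiF a w σ (t N)) Filter.atTop (nhds 0) :=
    (Phi_tendsto a w σ).comp Z.tendsto
  have hlim : Filter.Tendsto (fun N => Real.exp (PhiF a w σ (t (N+1)) - PhiF a w σ (t 1))) Filter.atTop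
        (nhds (Real.exp (0 - PhiF a w σ (t 1)))) :=
      (Real.continuous_exp.tendsto _).comp
        ((hPhi.comp (Filter.tendsto_add_atTop_nat 1)).sub_const _)
  rw [zero_sub] at hlim
  refine le_of_tendsto_of_tendsto' hlim hL.norm fun N => ?_
  rw [Z.prod_eq hw, Real.exp_le_exp]
  have e := Finset.sum_range_sub (fun n => PhiF a w σ (t (n+1))) N
  simp only [zero_add] at e
  rw [← e]
  refine Finset.sum_le_sum fun n _ => ?_
  obtain ⟨ξ, h1, h2, h3⟩ := Z.exists_xi h hw (n+1)
  rw [h3]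
  have hξ0 := (Z.pos (n+1)).trans h1
  refine log_mono hw hξ0 (g_anti w _ _ (Z.pos _) h1.le ?_)
  nlinarith [mul_nonneg (neg_nonneg.2 hp) (sq_nonneg ξ), sq_nonneg ‖w^2‖]

end ZSeq


lemma zseq_of (a : ℝ) (ha : 0 < a) (τ : ℕ → ℝ)
    (hτ : ∀ n : ℕ, 1 ≤ n → (√2 / a)^2 < τ n ∧ a * τ n - √2 * √(τ n) = n) :
    ZSeq a (fun n => if n = 0 then (√2 / a)^2 else τ n) := by
  have h2 : 0 < √2 := by positivity
  have hnu : ∀ n : ℕ, a * (if n = 0 then (√2 / a)^2 else τ n)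
      - √2 * √(if n = 0 then (√2 / a)^2 else τ n) = n := by
    intro n
    split_ifs with h
    · rw [Real.sqrt_sq (by positivity), h]; field_simp; simp
    · exact (hτ n (by omega)).2
  have hB : ∀ n : ℕ, (√2 / a)^2 ≤ (if n = 0 then (√2 / a)^2 else τ n) := by
    intro n
    split_ifs with h
    · exact le_rfl
    · exact (hτ n (by omega)).1.le
  refine ⟨ha, by simp, strictMono_nat_of_lt_succ fun n => ?_, hnu⟩
  have n1 := hnu n
  have n2 := hnu (n+1)
  have b1 := hB n
  have b2 := hB (n+1)
  generalize (if n = 0 then (√2 / a)^2 else τ n) = s at *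
  generalize (if n + 1 = 0 then (√2 / a)^2 else τ (n+1)) = t at *
  by_contra hc
  push Not at hc
  have p0 : (0:ℝ) < (√2 / a)^2 := by positivity
  have q1 : √2 / a ≤ √t := Real.le_sqrt_of_sq_le b2
  have q2 : √t ≤ √s := Real.sqrt_le_sqrt hc
  rw [div_le_iff₀ ha] at q1
  have e1 := Real.sq_sqrt (show 0 ≤ t by linarith)
  have e2 := Real.sq_sqrt (show 0 ≤ s by linarith)
  push_cast at n2
  have : 0 ≤ (√s - √t) * (a * (√s + √t) - √2) := by
    apply mul_nonneg (by linarith)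
    nlinarith [mul_le_mul_of_nonneg_left q2 ha.le]
  nlinarith

namespace ZSeq
variable {a : ℝ} {t : ℕ → ℝ}

lemma term_bound (Z : ZSeq a t) (w : ℂ) (n : ℕ) :
    ‖w^2 / ((t (n+1):ℝ):ℂ)^2‖ ≤ (a * ‖w‖)^2 / ((n:ℝ)+1)^2 := by
  have hg := Z.ge (n+1)
  have ha := Z.ha
  have hp := Z.pos (n+1)
  have hn : ‖((t (n+1):ℝ):ℂ)^2‖ = (t (n+1))^2 := by simp
  rw [norm_div, norm_pow, hn, mul_pow]
  push_cast at hg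
  have h1 : (((n:ℝ)+1)/a)^2 ≤ (t (n+1))^2 := by gcongr
  calc ‖w‖^2 / (t (n+1))^2 ≤ ‖w‖^2 / (((n:ℝ)+1)/a)^2 := by gcongr
    _ = _ := by field_simp

lemma summ_base (c : ℝ) : Summable (fun n : ℕ => c / ((n:ℝ)+1)^2) := by
  have h := (summable_nat_add_iff 1).2 (Real.summable_one_div_nat_pow.2 (one_lt_two))
  have := h.mul_left c
  refine this.congr fun n => ?_
  push_cast; ring

lemma summ (Z : ZSeq a t) (w : ℂ) : Summable (fun n : ℕ => ‖-(w^2 / ((t (n+1):ℝ):ℂ)^2)‖) := by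
  simp only [norm_neg]
  exact Summable.of_nonneg_of_le (fun _ => norm_nonneg _) (Z.term_bound w) (summ_base _)

lemma mult (Z : ZSeq a t) (w : ℂ) : Multipliable (fun n : ℕ => 1 - w^2 / ((t (n+1):ℝ):ℂ)^2) := by
  simpa [sub_eq_add_neg] using multipliable_one_add_of_summable (Z.summ w)

noncomputable def F (t : ℕ → ℝ) (w : ℂ) : ℂ := ∏' n : ℕ, (1 - w^2 / ((t (n+1):ℝ):ℂ)^2)

lemma F_tendsto (Z : ZSeq a t) (w : ℂ) :
    Filter.Tendsto (fun N => ∏ n ∈ Finset.range N, (1 - w^2 / ((t (n+1):ℝ):ℂ)^2)) Filter.atTop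
      (nhds (F t w)) := (Z.mult w).hasProd.tendsto_prod_nat

lemma F_ne (Z : ZSeq a t) {w : ℂ} (hw : w.im ≠ 0) : F t w ≠ 0 := by
  have := tprod_one_add_ne_zero_of_summable (f := fun n : ℕ => -(w^2 / ((t (n+1):ℝ):ℂ)^2))
    (fun n => by simpa [sub_eq_add_neg] using one_sub_ne hw _ (Z.pos (n+1))) (Z.summ w)
  simpa [F, sub_eq_add_neg] using this

lemma F_diff (Z : ZSeq a t) : Differentiable ℂ (F t) := by
  intro w₀
  have hopen : IsOpen (Metric.ball (0:ℂ) (‖w₀‖ + 1)) := Metric.isOpen_ball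
  have h := Summable.hasProdLocallyUniformlyOn_nat_one_add (f := fun (n : ℕ) (w : ℂ) => -(w^2 / ((t (n+1):ℝ):ℂ)^2))
    hopen (summ_base ((a * (‖w₀‖ + 1))^2)) (Filter.Eventually.of_forall fun n w hw => by
      rw [norm_neg]
      refine (Z.term_bound w n).trans ?_
      have ha := Z.ha
      have : ‖w‖ ≤ ‖w₀‖ + 1 := by simpa using (Metric.mem_ball.1 hw).le
      gcongr) (fun n => by fun_prop)
  have hd := h.differentiableOn
    (.of_forall fun _ ↦ by simpa [Finset.prod_fn] using
      DifferentiableOn.finsetProd (fun _ _ ↦ by fun_prop)) hopen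
  have hd' := hd.differentiableAt (hopen.mem_nhds (show w₀ ∈ Metric.ball (0:ℂ) (‖w₀‖ + 1) by simp))
  have e : F t = fun x : ℂ => ∏' i : ℕ, (1 + -(x^2 / ((t (i+1):ℝ):ℂ)^2)) := by
    funext x; simp [F, sub_eq_add_neg]
  rw [e]
  exact hd'

lemma F_type (Z : ZSeq a t) (w : ℂ) : ‖F t w‖ ≤ Real.exp (a * π * ‖w‖) := by
  have ha := Z.ha
  rcases eq_or_ne w 0 with rfl | hw
  · simp [F]
  set y := a * ‖w‖ with hy
  have hy0 : 0 < y := mul_pos ha (norm_pos_iff.2 hw)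
  have hx : ((y:ℂ) * Complex.I) ≠ 0 := mul_ne_zero (by exact_mod_cast hy0.ne') Complex.I_ne_zero
  have h1 := (tendsto_euler_sin_prod' hx).norm
  have h2 : ‖F t w‖ ≤ ‖Complex.sin (π * ((y:ℂ) * Complex.I)) / (π * ((y:ℂ) * Complex.I))‖ := by
    refine le_of_tendsto_of_tendsto' (Z.F_tendsto w).norm h1 fun N => ?_
    rw [norm_prod, norm_prod]
    refine Finset.prod_le_prod (fun _ _ => norm_nonneg _) fun n _ => ?_
    have e : (1 + sineTerm ((y:ℂ) * Complex.I) n) = ((1 + y^2 / ((n:ℝ)+1)^2 : ℝ):ℂ) := by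
      simp only [sineTerm, mul_pow, Complex.I_sq]; push_cast; ring
    rw [e, Complex.norm_real, Real.norm_eq_abs, abs_of_pos (by positivity)]
    refine (norm_sub_le _ _).trans ?_
    rw [norm_one]
    linarith [Z.term_bound w n]
  refine h2.trans ?_
  have e : (π * ((y:ℂ) * Complex.I)) = ((π * y : ℝ):ℂ) * Complex.I := by push_cast; ring
  have hpy : 0 < π * y := by positivity
  rw [e, Complex.sin_mul_I, norm_div, norm_mul, norm_mul, Complex.norm_I, mul_one, mul_one,
    ← Complex.ofReal_sinh, Complex.norm_real, Complex.norm_real, Real.norm_eq_abs, Real.norm_eq_abs,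
    abs_of_pos hpy, abs_of_pos (Real.sinh_pos_iff.2 hpy), div_le_iff₀ hpy, Real.sinh_eq]
  rw [show a * π * ‖w‖ = π * y by rw [hy]; ring]
  set s := π * y
  have h3 : Real.exp (-s) = Real.exp s * Real.exp (-(2*s)) := by rw [← Real.exp_add]; congr 1; ring
  have h4 := Real.add_one_le_exp (-(2*s))
  rw [h3]
  nlinarith [Real.exp_pos s]

/-- asymptotic two-sided bounds -/
lemma asym (Z : ZSeq a t) : ∃ C R : ℝ, 0 < C ∧ 1 ≤ R ∧ ∀ w : ℂ, w.im ≠ 0 → R ≤ ‖w‖ →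
    (0 < (w^2).re → ‖F t w‖ ≤ Real.exp (a * π * |w.im| - √2 * π * √(‖w‖ + |w.im|) + C)
      / (|(w^2).im| / ‖w^2‖)) ∧
    (0 < (w^2).re → Real.exp (a * π * |w.im| - √2 * π * √(‖w‖ + |w.im|) - C) / ‖w‖^2
      * (|(w^2).im| / ‖w^2‖) ≤ ‖F t w‖) ∧
    ((w^2).re ≤ 0 → Real.exp (a * π * |w.im| - √2 * π * √(‖w‖ + |w.im|) - C - 2 * Real.log ‖w‖)
       ≤ ‖F t w‖) := by
  obtain ⟨C0, hC0, H0⟩ := Phi_near a (t 0) Z.ha (Z.pos 0)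
  obtain ⟨C1, hC1, H1⟩ := Phi_near a (t 1) Z.ha (Z.pos 1)
  have p0 := Z.pos 0
  have p1 := Z.pos 1
  refine ⟨C0 + C1, 1 + 4 * t 0 + 4 * t 1, by positivity, by linarith, fun w hw hR => ?_⟩
  obtain ⟨σ, hσ⟩ := IsAlgClosed.exists_pow_nat_eq w (n := 2) (by norm_num)
  have n0 := abs_le.1 (H0 w σ hσ hw (by linarith))
  have n1 := abs_le.1 (H1 w σ hσ hw (by linarith))
  rw [Z.nu, Phi_zero a hσ hw] at n0 n1
  push_cast at n0 n1
  have hwp : 0 < ‖w‖ := by linarith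
  have hpos : 0 < (w^2).re → 0 < |(w^2).im| / ‖w^2‖ := by
    intro hp
    have hw0 : w ≠ 0 := norm_pos_iff.1 hwp
    have : (w^2).im ≠ 0 := by
      rw [sq, Complex.mul_im]
      have h1 : w.re ≠ 0 := by
        intro h0; rw [sq, Complex.mul_re, h0] at hp; nlinarith [mul_self_nonneg w.im]
      rw [show w.re * w.im + w.im * w.re = 2 * (w.re * w.im) by ring]
      exact mul_ne_zero two_ne_zero (mul_ne_zero h1 hw)
    exact div_pos (abs_pos.2 this) (norm_pos_iff.2 (pow_ne_zero 2 hw0))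
  have hl : Real.exp (2 * Real.log ‖w‖) = ‖w‖^2 := by
    rw [mul_comm, Real.exp_mul, Real.exp_log hwp]; norm_num
  refine ⟨fun hp => ?_, fun hp => ?_, fun hp => ?_⟩
  · refine (Z.bounds hσ hw hp (by linarith) _ (Z.F_tendsto w)).1.trans ?_
    rw [Real.exp_sub, Real.exp_log (hpos hp)]
    have := hpos hp
    gcongr
    linarith
  · refine le_trans ?_ (Z.bounds hσ hw hp (by linarith) _ (Z.F_tendsto w)).2
    rw [Real.exp_add, Real.exp_log (hpos hp), ← hl, ← Real.exp_sub]
    have := hpos hp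
    gcongr
    linarith
  · refine le_trans ?_ (Z.bounds' hσ hw hp _ (Z.F_tendsto w))
    gcongr
    linarith

end ZSeq

lemma fin_patch (f v : ℤ → ℝ) (hf : ∀ k, 0 ≤ f k) (hv : ∀ k, 0 ≤ v k) (hv' : ∀ k, k ≠ 0 → 0 < v k)
    (C₀ K : ℝ) (hC₀ : 0 < C₀) (h : ∀ k : ℤ, K ≤ |(k:ℝ)| → f k ≤ C₀ * v k) :
    ∃ C > 0, ∀ k : ℤ, k ≠ 0 → f k ≤ C * v k := by
  set S := Finset.Icc (-⌈K⌉) ⌈K⌉ with hS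
  have hs : 0 ≤ ∑ k ∈ S, f k / v k := Finset.sum_nonneg fun k _ => div_nonneg (hf k) (hv k)
  refine ⟨C₀ + ∑ k ∈ S, f k / v k, by linarith, fun k hk => ?_⟩
  have hvk := hv' k hk
  rcases le_or_gt K |(k:ℝ)| with h1 | h1
  · have := h k h1
    nlinarith [mul_nonneg hs hvk.le]
  · have hmem : k ∈ S := by
      rw [hS, Finset.mem_Icc, ← abs_le]
      have : ((|k| : ℤ):ℝ) ≤ (⌈K⌉:ℝ) := by push_cast; exact h1.le.trans (Int.le_ceil K)
      exact_mod_cast this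
    have h2 := Finset.single_le_sum (f := fun k => f k / v k) (fun k _ => div_nonneg (hf k) (hv k)) hmem
    have h3 : f k / v k * v k = f k := div_mul_cancel₀ _ hvk.ne'
    nlinarith [mul_le_mul_of_nonneg_right h2 hvk.le]

lemma half_sq (k : ℤ) : (((k:ℂ)^4 - 4*(k:ℂ)^2) ^ ((1:ℂ)/2))^2 = (((k:ℝ)^4 - 4*(k:ℝ)^2 : ℝ):ℂ) := by
  rw [one_div, show ((2:ℂ)⁻¹) = (((2:ℕ):ℂ)⁻¹) by norm_num, Complex.cpow_nat_inv_pow _ two_ne_zero]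
  push_cast; ring

lemma half_real (k : ℤ) (hk : 2 ≤ |(k:ℝ)|) :
    ((k:ℂ)^4 - 4*(k:ℂ)^2) ^ ((1:ℂ)/2) = ((√((k:ℝ)^4 - 4*(k:ℝ)^2) : ℝ):ℂ) := by
  have h4 : 4 ≤ (k:ℝ)^2 := by rw [← sq_abs]; nlinarith
  have : (k:ℂ)^4 - 4*(k:ℂ)^2 = (((k:ℝ)^4 - 4*(k:ℝ)^2 : ℝ):ℂ) := by push_cast; ring
  rw [this, Real.sqrt_eq_rpow, Complex.ofReal_cpow (by nlinarith)]
  push_cast; ring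

lemma half_re (k : ℤ) (s : ℂ) (hs : s^2 = (((k:ℝ)^4 - 4*(k:ℝ)^2 : ℝ):ℂ)) :
    s.re^2 ≠ ((k:ℝ)^2 + 2)^2 := by
  intro h
  have h1 := congrArg Complex.re hs
  have h2 := congrArg Complex.im hs
  rw [sq, Complex.mul_re, Complex.ofReal_re] at h1
  rw [sq, Complex.mul_im, Complex.ofReal_im] at h2
  have h3 : s.re * s.im = 0 := by linarith
  rcases mul_eq_zero.1 h3 with h0 | h0
  · rw [h0] at h; nlinarith [sq_nonneg (k:ℝ)]
  · rw [h0] at h1; nlinarith [sq_nonneg (k:ℝ)]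

lemma lamP_im (k : ℤ) : (Complex.I * lamP k - Complex.I).im ≠ 0 := by
  intro h
  have hr := half_re k _ (half_sq k)
  unfold lamP at h
  set s := ((k:ℂ)^4 - 4*(k:ℂ)^2) ^ ((1:ℂ)/2)
  apply hr
  have hk : ((k:ℂ)^2).re = (k:ℝ)^2 := by
    rw [← Complex.ofReal_intCast, ← Complex.ofReal_pow, Complex.ofReal_re]
  simp [hk] at h
  have : s.re = (k:ℝ)^2 + 2 := by linarith
  rw [this]

lemma lamM_im (k : ℤ) : (Complex.I * lamM k - Complex.I).im ≠ 0 := by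
  intro h
  have hr := half_re k _ (half_sq k)
  unfold lamM at h
  set s := ((k:ℂ)^4 - 4*(k:ℂ)^2) ^ ((1:ℂ)/2)
  apply hr
  have hk : ((k:ℂ)^2).re = (k:ℝ)^2 := by
    rw [← Complex.ofReal_intCast, ← Complex.ofReal_pow, Complex.ofReal_re]
  simp [hk] at h
  have : s.re = -((k:ℝ)^2 + 2) := by linarith
  rw [this]; ring

lemma sqrtS (k : ℝ) (hk : 2 ≤ |k|) : k^2 - 4 ≤ √(k^4 - 4*k^2) ∧ √(k^4 - 4*k^2) ≤ k^2 := by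
  have h4 : 4 ≤ k^2 := by rw [← sq_abs]; nlinarith
  constructor
  · apply Real.le_sqrt_of_sq_le; nlinarith
  · apply Real.sqrt_le_iff.2; constructor <;> nlinarith

lemma lamP_form (k : ℤ) (hk : 2 ≤ |(k:ℝ)|) : ∃ η : ℝ, 1 ≤ η ∧ η ≤ 3 ∧
    Complex.I * lamP k - Complex.I = ⟨-(k:ℝ), -η⟩ := by
  obtain ⟨h1, h2⟩ := sqrtS k hk
  refine ⟨1 + ((k:ℝ)^2 - √((k:ℝ)^4 - 4*(k:ℝ)^2))/2, by linarith, by linarith, ?_⟩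
  unfold lamP
  rw [half_real k hk, Complex.mk_eq_add_mul_I]
  push_cast
  linear_combination (k:ℂ) * Complex.I_sq

lemma lamM_form (k : ℤ) (hk : 2 ≤ |(k:ℝ)|) : ∃ η : ℝ, (k:ℝ)^2 - 1 ≤ η ∧ η ≤ (k:ℝ)^2 + 1 ∧
    Complex.I * lamM k - Complex.I = ⟨-(k:ℝ), -η⟩ := by
  obtain ⟨h1, h2⟩ := sqrtS k hk
  refine ⟨1 + ((k:ℝ)^2 + √((k:ℝ)^4 - 4*(k:ℝ)^2))/2, by linarith, by linarith, ?_⟩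
  unfold lamM
  rw [half_real k hk, Complex.mk_eq_add_mul_I]
  push_cast
  linear_combination (k:ℂ) * Complex.I_sq

lemma pt_facts (x η : ℝ) : ((⟨x, -η⟩ : ℂ)^2).re = x^2 - η^2 ∧ |((⟨x, -η⟩ : ℂ)^2).im| = 2 * |x| * |η| ∧
    ‖(⟨x, -η⟩ : ℂ)^2‖ = x^2 + η^2 ∧ ‖(⟨x, -η⟩ : ℂ)‖^2 = x^2 + η^2 ∧ |x| ≤ ‖(⟨x, -η⟩ : ℂ)‖ ∧
    ‖(⟨x, -η⟩ : ℂ)‖ ≤ |x| + |η| := by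
  have h4 : ‖(⟨x, -η⟩ : ℂ)‖^2 = x^2 + η^2 := by
    rw [Complex.sq_norm, Complex.normSq_apply]; ring
  refine ⟨by rw [sq, Complex.mul_re]; ring, ?_, by rw [norm_pow, h4], h4, Complex.abs_re_le_norm (⟨x, -η⟩ : ℂ), ?_⟩
  · rw [sq, Complex.mul_im]
    rw [show x * -η + -η * x = -(2 * (x * η)) by ring, abs_neg, abs_mul, abs_mul]
    simp [mul_assoc]
  · have := Complex.norm_le_abs_re_add_abs_im (⟨x, -η⟩ : ℂ)
    simpa using this

namespace ZSeq
variable {a : ℝ} {t : ℕ → ℝ}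

lemma part_a (Z : ZSeq a t) : ∃ C > 0, ∀ x : ℝ, ‖F t ((x:ℂ) - Complex.I)‖
    ≤ C * (1 + |x|) * Real.exp (-(√2 * π * √|x|)) := by
  have ha := Z.ha
  obtain ⟨C, R, hC, hR, H⟩ := Z.asym
  refine ⟨Real.exp (a * π + C) + Real.exp (a * π * (R + 2) + √2 * π * √(R+1)), by positivity, fun x => ?_⟩
  have hz : (x:ℂ) - Complex.I = ⟨x, -1⟩ := by
    rw [Complex.mk_eq_add_mul_I]; push_cast; ring
  obtain ⟨f1, f2, f3, f4, f5, f6⟩ := pt_facts x 1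
  rw [hz]
  set w : ℂ := ⟨x, -1⟩ with hw
  have him : w.im = -1 := rfl
  have hE := Real.exp_pos (-(√2 * π * √|x|))
  rcases le_or_gt |x| (R+1) with hx | hx
  · refine (Z.F_type w).trans ?_
    rw [abs_one] at f6
    have h1 : Real.exp (a * π * ‖w‖) ≤ Real.exp (a * π * (R + 2) + √2 * π * √(R+1)) *
        Real.exp (-(√2 * π * √|x|)) := by
      rw [← Real.exp_add, Real.exp_le_exp]
      have : √|x| ≤ √(R+1) := Real.sqrt_le_sqrt hx
      have h2 : √2 * π * √|x| ≤ √2 * π * √(R+1) := by gcongr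
      have h3 : a * π * ‖w‖ ≤ a * π * (R+2) := by
        have : ‖w‖ ≤ R + 2 := by linarith
        gcongr
      linarith
    refine h1.trans ?_
    gcongr
    have := Real.exp_pos (a * π + C)
    have := Real.exp_pos (a * π * (R + 2) + √2 * π * √(R+1))
    nlinarith [abs_nonneg x]
  · have hx2 : 1 < x^2 := by rw [← sq_abs]; nlinarith
    have h := (H w (by rw [him]; norm_num) (by linarith)).1 (by rw [f1]; linarith)
    refine h.trans ?_
    rw [f2, f3, him]
    simp only [abs_neg, abs_one, mul_one, one_pow]
    have hxp : 0 < |x| := by linarith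
    rw [div_div_eq_mul_div, div_le_iff₀ (by positivity)]
    have h1 : Real.exp (a * π - √2 * π * √(‖w‖ + 1) + C) ≤ Real.exp (a * π + C) * Real.exp (-(√2 * π * √|x|)) := by
      rw [← Real.exp_add, Real.exp_le_exp]
      have : √|x| ≤ √(‖w‖+1) := Real.sqrt_le_sqrt (by linarith)
      have h2 : √2 * π * √|x| ≤ √2 * π * √(‖w‖+1) := by gcongr
      linarith
    have h2 : x^2 + 1 ≤ (1 + |x|) * (2 * |x|) := by nlinarith [sq_abs x]
    calc _ ≤ (Real.exp (a * π + C) * Real.exp (-(√2 * π * √|x|))) * ((1 + |x|) * (2 * |x|)) := by gcongr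
      _ ≤ ((Real.exp (a * π + C) + Real.exp (a * π * (R + 2) + √2 * π * √(R+1))) * Real.exp (-(√2 * π * √|x|))) * ((1 + |x|) * (2 * |x|)) := by
        gcongr
        have := Real.exp_pos (a * π * (R + 2) + √2 * π * √(R+1))
        linarith
      _ = _ := by ring

lemma part_b (Z : ZSeq a t) : ∃ C > 0, ∀ k : ℤ, k ≠ 0 →
    Real.exp (-(√2 * π * √|(k:ℝ)|)) / |(k:ℝ)|^3 ≤ C * ‖F t (Complex.I * lamP k - Complex.I)‖ := by
  have ha := Z.ha
  obtain ⟨C, R, hC, hR, H⟩ := Z.asym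
  refine fin_patch _ _ (fun k => by positivity) (fun k => norm_nonneg _)
    (fun k _ => norm_pos_iff.2 (Z.F_ne (lamP_im k))) (2 * Real.exp (3 * (√2 * π) + C)) (R + 4)
    (by positivity) fun k hk => ?_
  obtain ⟨η, h1, h3, e⟩ := lamP_form k (by linarith)
  obtain ⟨f1, f2, f3, f4, f5, f6⟩ := pt_facts (-(k:ℝ)) η
  rw [e]
  set w : ℂ := ⟨-(k:ℝ), -η⟩ with hw
  have him : w.im = -η := rfl
  rw [abs_neg] at f2 f5 f6
  rw [neg_sq] at f1 f3 f4
  set y := |(k:ℝ)| with hy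
  have hyy : (k:ℝ)^2 = y^2 := (sq_abs _).symm
  rw [hyy] at f1 f3 f4
  rw [abs_of_pos (show 0 < η by linarith)] at f2 f6
  have h := (H w (by rw [him]; linarith) (by linarith)).2.1 (by rw [f1]; nlinarith)
  rw [f2, f3, f4, him, abs_neg, abs_of_pos (show 0 < η by linarith)] at h
  have hy4 : 4 ≤ y := by linarith
  have g1 : √(‖w‖ + η) ≤ √y + 3 := by
    apply Real.sqrt_le_iff.2
    refine ⟨by positivity, ?_⟩
    have := Real.sq_sqrt (show 0 ≤ y by linarith)
    nlinarith [Real.sqrt_nonneg y]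
  have g2 : Real.exp (-(√2 * π * √y)) ≤ Real.exp (3 * (√2 * π) + C) *
      Real.exp (a * π * η - √2 * π * √(‖w‖ + η) - C) := by
    rw [← Real.exp_add, Real.exp_le_exp]
    have : √2 * π * √(‖w‖ + η) ≤ √2 * π * (√y + 3) := by gcongr
    have : 0 ≤ a * π * η := by positivity
    linarith
  have g3 : 1 / y^3 ≤ 2 * (1 / (y^2 + η^2) * (2 * y * η / (y^2 + η^2))) := by
    rw [div_mul_div_comm, mul_div_assoc', div_le_div_iff₀ (by positivity) (by positivity)]
    have hb : y^2 + η^2 ≤ 2 * y^2 := by nlinarith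
    have : (y^2 + η^2) * (y^2+η^2) ≤ (2*y^2)*(2*y^2) := by gcongr
    have h5 : y^4 * 1 ≤ y^4 * η := by gcongr
    nlinarith
  calc Real.exp (-(√2 * π * √y)) / y^3 = Real.exp (-(√2 * π * √y)) * (1 / y^3) := by ring
    _ ≤ (Real.exp (3 * (√2 * π) + C) *
      Real.exp (a * π * η - √2 * π * √(‖w‖ + η) - C)) * (2 * (1 / (y^2 + η^2) * (2 * y * η / (y^2 + η^2)))) := by
        gcongr
    _ = 2 * Real.exp (3 * (√2 * π) + C) * (Real.exp (a * π * η - √2 * π * √(‖w‖ + η) - C) / (y^2 + η^2) * (2 * y * η / (y^2 + η^2))) := by ring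
    _ ≤ _ := by gcongr

lemma part_c (Z : ZSeq a t) : ∃ C > 0, ∀ k : ℤ, k ≠ 0 →
    Real.exp (a * π * (k:ℝ)^2 - 2 * √2 * π * |(k:ℝ)|) ≤ C * ‖F t (Complex.I * lamM k - Complex.I)‖ := by
  have ha := Z.ha
  obtain ⟨C, R, hC, hR, H⟩ := Z.asym
  refine fin_patch _ _ (fun k => by positivity) (fun k => norm_nonneg _)
    (fun k _ => norm_pos_iff.2 (Z.F_ne (lamM_im k))) (Real.exp (a * π + 2 * π + 2 * Real.log 3 + C)) (R + 4)
    (by positivity) fun k hk => ?_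
  obtain ⟨η, h1, h3, e⟩ := lamM_form k (by linarith)
  obtain ⟨f1, f2, f3, f4, f5, f6⟩ := pt_facts (-(k:ℝ)) η
  rw [e]
  set w : ℂ := ⟨-(k:ℝ), -η⟩ with hw
  have him : w.im = -η := rfl
  rw [abs_neg] at f2 f5 f6
  rw [neg_sq] at f1 f3 f4
  set y := |(k:ℝ)| with hy
  have hyy : (k:ℝ)^2 = y^2 := (sq_abs _).symm
  rw [hyy] at f1 f3 f4 h1 h3 ⊢
  have hy4 : 4 ≤ y := by linarith
  have hη : y ≤ η := by nlinarith
  rw [abs_of_pos (show 0 < η by linarith)] at f2 f6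
  have h := (H w (by rw [him]; linarith) (by linarith)).2.2 (by rw [f1]; nlinarith)
  rw [him, abs_neg, abs_of_pos (show 0 < η by linarith)] at h
  have hs2 := Real.sq_sqrt (show (0:ℝ) ≤ 2 by norm_num)
  have g1 : √(‖w‖ + η) ≤ √2 * (y + 1) := by
    apply Real.sqrt_le_iff.2
    refine ⟨by positivity, ?_⟩
    rw [mul_pow, hs2]
    nlinarith
  have hwp : 0 < ‖w‖ := by linarith
  have g2 : Real.log ‖w‖ ≤ Real.log 3 + y := by
    have : Real.log ‖w‖ ≤ Real.log (3 * y^2) := Real.log_le_log hwp (by nlinarith)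
    rw [Real.log_mul (by norm_num) (by positivity), Real.log_pow] at this
    have l1 := Real.log_le_sub_one_of_pos (show 0 < y/2 by linarith)
    rw [Real.log_div (by linarith) (by norm_num)] at l1
    have l2 := Real.log_le_sub_one_of_pos (show (0:ℝ) < 2 by norm_num)
    push_cast at this
    linarith
  refine le_trans ?_ (mul_le_mul_of_nonneg_left h (Real.exp_pos _).le)
  rw [← Real.exp_add, Real.exp_le_exp]
  have k1 : √2 * π * √(‖w‖ + η) ≤ √2 * π * (√2 * (y+1)) := by gcongr
  have k2 : √2 * π * (√2 * (y+1)) = 2 * π * (y + 1) := by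
    calc _ = √2^2 * π * (y+1) := by ring
      _ = _ := by rw [hs2]
  have k3 : a * π * (y^2 - 1) ≤ a * π * η := by gcongr
  have k4 : 1.4 ≤ √2 := by apply Real.le_sqrt_of_sq_le; norm_num
  have k5 : 3 < π := Real.pi_gt_three
  have k6 : 2 * y + 2 * π * y ≤ 2 * √2 * π * y := by
    have : 2 + 2 * π ≤ 2 * √2 * π := by nlinarith
    nlinarith
  linarith

end ZSeq


/-- **Estimates on the multiplier `m(z) = ∏_{n≥1} (1 - (z-i)²/τ_n²)`.**
Here `T > 2π`, `a = T/(2π) - 1`, `b = √2`, `B = (b/a)²`, and `τ_n > B` is the unique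
solution of `a·τ_n - b·√τ_n = n`.  The function `m` is entire of exponential type at most
`aπ`, satisfies `|m(x)| ≤ C(1+|x|)e^{-√2 π √|x|}` on ℝ, and admits the stated lower
bounds at the points `iλ_k^±`. -/
theorem multiplier_estimates
    (T : ℝ) (hT : 2 * π < T)
    (a : ℝ) (haT : a = T / (2 * π) - 1)
    (τ : ℕ → ℝ)
    (hτ : ∀ n : ℕ, 1 ≤ n →
      (Real.sqrt 2 / a)^2 < τ n ∧ a * τ n - Real.sqrt 2 * Real.sqrt (τ n) = n)
    (m : ℂ → ℂ)
    (hm : m = fun z : ℂ => ∏' n : ℕ, (1 - (z - Complex.I)^2 / ((τ (n+1) : ℝ) : ℂ)^2)) :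
    (∀ z : ℂ, Multipliable
        (fun n : ℕ => 1 - (z - Complex.I)^2 / ((τ (n+1) : ℝ) : ℂ)^2)) ∧
    Differentiable ℂ m ∧
    -- exponential type at most aπ
    (∀ ε > (0:ℝ), ∃ C > (0:ℝ), ∀ z : ℂ, ‖m z‖ ≤ C * Real.exp ((a * π + ε) * ‖z‖)) ∧
    ∃ C > (0:ℝ),
      -- (a) decay on the real axis
      (∀ x : ℝ, ‖m (x:ℂ)‖ ≤ C * (1 + |x|) * Real.exp (-(Real.sqrt 2 * π * Real.sqrt |x|))) ∧
      -- (b) lower bound at the hyperbolic points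
      (∀ k : ℤ, k ≠ 0 →
        Real.exp (-(Real.sqrt 2 * π * Real.sqrt |(k:ℝ)|)) / (C * |(k:ℝ)|^3)
          ≤ ‖m (Complex.I * lamP k)‖) ∧
      -- (c) lower bound at the parabolic points
      (∀ k : ℤ, k ≠ 0 →
        Real.exp (a * π * (k:ℝ)^2 - 2 * Real.sqrt 2 * π * |(k:ℝ)|) / C
          ≤ ‖m (Complex.I * lamM k)‖) := by
  have hpi := Real.pi_pos
  have ha : 0 < a := by
    rw [haT, sub_pos, lt_div_iff₀ (by positivity)]; linarith
  have Z := zseq_of a ha τ hτ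
  set t : ℕ → ℝ := fun n => if n = 0 then (√2 / a)^2 else τ n with ht
  have htn : ∀ n, τ (n+1) = t (n+1) := fun n => by simp [ht]
  have hmF : ∀ z, m z = ZSeq.F t (z - Complex.I) := by
    intro z
    rw [hm]
    simp only [ZSeq.F, htn]
  refine ⟨fun z => ?_, ?_, fun ε hε => ?_, ?_⟩
  · simp only [htn]; exact Z.mult _
  · have : m = fun z => ZSeq.F t (z - Complex.I) := funext hmF
    rw [this]
    exact Z.F_diff.comp (differentiable_id.sub_const _)
  · refine ⟨Real.exp (a * π), Real.exp_pos _, fun z => ?_⟩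
    rw [hmF, ← Real.exp_add]
    refine (Z.F_type _).trans (Real.exp_le_exp.2 ?_)
    have h1 : ‖z - Complex.I‖ ≤ ‖z‖ + 1 := by simpa using norm_sub_le z Complex.I
    have h2 : a * π * ‖z - Complex.I‖ ≤ a * π * (‖z‖ + 1) := by gcongr
    have h3 : 0 ≤ ε * ‖z‖ := by positivity
    linarith
  · obtain ⟨Ca, hCa, Ha⟩ := Z.part_a
    obtain ⟨Cb, hCb, Hb⟩ := Z.part_b
    obtain ⟨Cc, hCc, Hc⟩ := Z.part_c
    refine ⟨Ca + Cb + Cc, by positivity, fun x => ?_, fun k hk => ?_, fun k hk => ?_⟩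
    · rw [hmF]
      refine (Ha x).trans ?_
      gcongr
      linarith
    · rw [hmF, mul_comm (Ca + Cb + Cc), ← div_div, div_le_iff₀ (by positivity)]
      have h1 := Hb k hk
      have h2 : 0 ≤ ‖ZSeq.F t (Complex.I * lamP k - Complex.I)‖ := norm_nonneg _
      nlinarith [mul_nonneg hCa.le h2, mul_nonneg hCc.le h2]
    · rw [hmF, div_le_iff₀ (by positivity)]
      have h1 := Hc k hk
      have h2 : 0 ≤ ‖ZSeq.F t (Complex.I * lamM k - Complex.I)‖ := norm_nonneg _
      nlinarith [mul_nonneg hCa.le h2, mul_nonneg hCb.le h2]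
end

section
/- Define P₂(z) = z·∏_{k∈ℤ∖{0}} (1 + z/(iλ_k^-)), an absolutely convergent product (since |λ_k^-| ≍ k²) defining an entire function. Then there exist constants C > 0 and c > 0 such that: (a) |P₂(z)| ≤ C e^{2π√|z|} for every z ∈ ℂ; (b) |P₂(x)| ≤ C e^{√2·π·√|x|} for every x ∈ ℝ; (c) |P₂(−iλ_k^+)| ≥ c e^{√2·π·√|k|} for every k ∈ ℤ∖{0, ±2}. -/
open Real

/-- The canonical product over the parabolic branch:
`P₂(z) = z ∏_{k ≠ 0} (1 + z/(iλ_k⁻))` (absolutely convergent product). -/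
noncomputable def P₂ (z : ℂ) : ℂ :=
  z * ∏' k : {k : ℤ // k ≠ 0}, (1 + z / (Complex.I * lamM k.1))

lemma lam_large (k : ℤ) (hk : 2 ≤ |k|) : ∃ b : ℝ, 1 ≤ b ∧ b ≤ 2 ∧
    lamM k = ((-((k:ℝ)^2 - b) : ℝ) : ℂ) + (k:ℝ) * Complex.I ∧
    lamP k = ((-b : ℝ) : ℂ) + (k:ℝ) * Complex.I := by
  have hk2 : (4:ℝ) ≤ (k:ℝ)^2 := by
    have h : (2:ℝ) ≤ |(k:ℝ)| := by exact_mod_cast hk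
    rw [← sq_abs]; nlinarith
  set d : ℝ := Real.sqrt ((k:ℝ)^4 - 4 * (k:ℝ)^2) with hd
  have hnn : 0 ≤ (k:ℝ)^4 - 4 * (k:ℝ)^2 := by nlinarith
  have hd2 : d ^ 2 = (k:ℝ)^4 - 4 * (k:ℝ)^2 := Real.sq_sqrt hnn
  have hd0 : 0 ≤ d := Real.sqrt_nonneg _
  have hs : ((k:ℂ)^4 - 4*(k:ℂ)^2) ^ ((1:ℂ)/2) = (d:ℂ) := by
    rw [hd, Real.sqrt_eq_rpow, Complex.ofReal_cpow hnn]
    push_cast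
    rfl
  refine ⟨((k:ℝ)^2 - d)/2, ?_, ?_, ?_, ?_⟩
  · have : d ≤ (k:ℝ)^2 - 2 := by
      apply le_of_sq_le_sq _ (by linarith)
      nlinarith
    linarith
  · have : (k:ℝ)^2 - 4 ≤ d := by
      apply le_of_sq_le_sq _ hd0
      nlinarith
    linarith
  · rw [lamM, hs]; push_cast; ring
  · rw [lamP, hs]; push_cast; ring

lemma sqrt_neg_three : ((-3:ℂ)) ^ ((1:ℂ)/2) = (Real.sqrt 3 : ℝ) * Complex.I := by
  have h3 : (0:ℝ) < Real.sqrt 3 := by positivity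
  have harg : Complex.arg ((Real.sqrt 3 : ℝ) * Complex.I) = π / 2 := by
    rw [Complex.arg_real_mul _ h3, Complex.arg_I]
  have := Complex.pow_cpow_nat_inv (x := (Real.sqrt 3 : ℝ) * Complex.I) (n := 2) (by norm_num)
    (by rw [harg]; push_cast; linarith [Real.pi_pos]) (by rw [harg]; push_cast; rfl)
  rw [← this]
  have h2 : ((Real.sqrt 3 : ℝ) * Complex.I : ℂ)^2 = -3 := by
    rw [mul_pow, Complex.I_sq, ← Complex.ofReal_pow, Real.sq_sqrt (by norm_num)]; norm_num
  rw [this.symm.symm, ← h2]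
  conv_rhs => rw [← this]
  norm_num

lemma lam_small (k : ℤ) (hk : k^2 = 1) :
    lamM k = ((-1/2 : ℝ) : ℂ) + (((k:ℝ) - Real.sqrt 3 / 2 : ℝ) : ℂ) * Complex.I ∧
    lamP k = ((-1/2 : ℝ) : ℂ) + (((k:ℝ) + Real.sqrt 3 / 2 : ℝ) : ℂ) * Complex.I := by
  have hk2 : (k:ℂ)^2 = 1 := by exact_mod_cast hk
  have h4 : (k:ℂ)^4 - 4 * (k:ℂ)^2 = -3 := by
    rw [show (k:ℂ)^4 = ((k:ℂ)^2)^2 by ring, hk2]; norm_num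
  constructor
  · rw [lamM, h4, sqrt_neg_three, hk2]; push_cast; ring
  · rw [lamP, h4, sqrt_neg_three, hk2]; push_cast; ring

lemma lamM_zero : lamM 0 = 0 := by simp [lamM]

noncomputable def nuC (j : ℤ) : ℂ := ((-((j:ℝ)^2) + 1/4 : ℝ) : ℂ) + ((j:ℝ):ℂ) * Complex.I

lemma int_cases (j : ℤ) (hj : j ≠ 0) : j^2 = 1 ∨ 2 ≤ |j| := by
  rcases le_or_gt 2 |j| with h | h
  · exact Or.inr h
  · left
    have : 0 < |j| := abs_pos.mpr hj
    have : |j| = 1 := by omega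
    rw [← sq_abs, this]; norm_num

lemma sqrt3_bds : 1.7 ≤ Real.sqrt 3 ∧ Real.sqrt 3 ≤ 1.8 := by
  constructor
  · apply Real.le_sqrt_of_sq_le; norm_num
  · rw [Real.sqrt_le_left (by norm_num)]; norm_num

lemma lam_sub_nu (j : ℤ) (hj : j ≠ 0) : ‖lamM j - nuC j‖ ≤ 2 := by
  rcases int_cases j hj with h | h
  · rw [(lam_small j h).1]
    have hj1 : (j:ℝ)^2 = 1 := by exact_mod_cast h
    obtain ⟨h1, h2⟩ := sqrt3_bds
    refine (Complex.norm_le_abs_re_add_abs_im _).trans ?_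
    simp only [nuC, hj1]
    simp
    rw [abs_of_nonneg (by positivity)]
    norm_num at *
    rw [abs_of_pos (by norm_num)]
    linarith
  · obtain ⟨b, h1, h2, h3, _⟩ := lam_large j h
    rw [h3, nuC, show (((-((j:ℝ)^2 - b) : ℝ) : ℂ) + (j:ℝ) * Complex.I) -
      (((-((j:ℝ)^2) + 1/4 : ℝ) : ℂ) + ((j:ℝ):ℂ) * Complex.I) = ((b - 1/4 : ℝ) : ℂ) by
        push_cast; ring, Complex.norm_real, Real.norm_eq_abs, abs_le]
    constructor <;> linarith

lemma sq_ge_four {j : ℤ} (h : 2 ≤ |j|) : (4:ℝ) ≤ (j:ℝ)^2 := by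
  have h : (2:ℝ) ≤ |(j:ℝ)| := by exact_mod_cast h
  rw [← sq_abs]; nlinarith

lemma sq_ge_one {j : ℤ} (h : j ≠ 0) : (1:ℝ) ≤ (j:ℝ)^2 := by
  have h : 1 ≤ j^2 := by have := sq_pos_of_ne_zero h; omega
  exact_mod_cast h

lemma lam_re (j : ℤ) (hj : j ≠ 0) : (lamM j).re ≤ -((j:ℝ)^2/2) := by
  rcases int_cases j hj with h | h
  · rw [(lam_small j h).1]
    have hj1 : (j:ℝ)^2 = 1 := by exact_mod_cast h
    simp [hj1]; norm_num
  · obtain ⟨b, h1, h2, h3, _⟩ := lam_large j h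
    have := sq_ge_four h
    rw [h3, Complex.add_re, Complex.ofReal_re, Complex.re_ofReal_mul, Complex.I_re]; linarith

lemma lam_norm_ge (j : ℤ) (hj : j ≠ 0) : (j:ℝ)^2/2 ≤ ‖lamM j‖ := by
  have h1 := lam_re j hj
  have h2 := Complex.abs_re_le_norm (lamM j)
  have h3 := neg_abs_le (lamM j).re
  linarith

lemma lam_ne (j : ℤ) (hj : j ≠ 0) : lamM j ≠ 0 := by
  have := lam_norm_ge j hj
  have := sq_ge_one hj
  exact norm_pos_iff.mp (by linarith)

lemma nu_norm (j : ℤ) : ‖nuC j‖ = (j:ℝ)^2 + 1/4 := by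
  have : nuC j = -(((j:ℝ):ℂ) + ((-1/2 : ℝ):ℂ) * Complex.I)^2 := by
    rw [nuC]; push_cast; ring_nf; rw [Complex.I_sq]; ring
  rw [this, norm_neg, norm_pow, Complex.sq_norm, Complex.normSq_add_mul_I]; ring

lemma lam_norm_le (j : ℤ) (hj : j ≠ 0) : ‖lamM j‖ ≤ (j:ℝ)^2 + 9/4 := by
  have h1 := lam_sub_nu j hj
  have h2 := norm_sub_norm_le (lamM j) (nuC j)
  rw [nu_norm] at h2; linarith

lemma sq_le_lam (j : ℤ) (hj : j ≠ 0) : (j:ℝ)^2 ≤ (1 + 8/(j:ℝ)^2) * ‖lamM j‖ := by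
  have h1 := lam_sub_nu j hj
  have h2 := norm_sub_norm_le (nuC j) (lamM j)
  rw [norm_sub_rev, nu_norm] at h2
  have h3 := lam_norm_ge j hj
  have h4 := sq_ge_one hj
  have : 2 ≤ 8/(j:ℝ)^2 * ‖lamM j‖ := by
    rw [div_mul_eq_mul_div, le_div_iff₀ (by linarith)]; linarith
  linarith

lemma lam_le_sq (j : ℤ) (hj : j ≠ 0) : ‖lamM j‖ ≤ (1 + 8/(j:ℝ)^2) * (j:ℝ)^2 := by
  have h4 := sq_ge_one hj
  have := lam_norm_le j hj
  rw [add_mul, div_mul_cancel₀ _ (by positivity)]; linarith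

/-- the factor -/
noncomputable def facC (z : ℂ) (k : ℤ) : ℂ := 1 + z / (Complex.I * lamM k)

lemma fac_norm (z : ℂ) (j : ℤ) (hj : j ≠ 0) :
    ‖facC z j‖ = ‖Complex.I * z - lamM j‖ / ‖lamM j‖ := by
  have h := lam_ne j hj
  rw [← norm_div, ← norm_neg (_ / _), facC]
  congr 1
  have hI := Complex.I_ne_zero
  field_simp
  ring_nf
  simp [Complex.I_sq]
  try ring

lemma fac_zero (z : ℂ) : facC z 0 = 1 := by simp [facC, lamM_zero]

lemma fac_upper (z w' : ℂ) (j : ℤ) (hj : j ≠ 0)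
    (h : ‖Complex.I * z - lamM j‖ ≤ (1 + 8/(j:ℝ)^2) * ‖w' - nuC j‖) :
    ‖facC z j‖ ≤ Real.exp (16/(j:ℝ)^2) * (‖w' - nuC j‖/(j:ℝ)^2) := by
  have h4 := sq_ge_one hj
  have hl := lam_norm_ge j hj
  have hle := sq_le_lam j hj
  have he : 1 + 8/(j:ℝ)^2 ≤ Real.exp (8/(j:ℝ)^2) := by
    have := Real.add_one_le_exp (8/(j:ℝ)^2); linarith
  have he2 : Real.exp (16/(j:ℝ)^2) = Real.exp (8/(j:ℝ)^2) * Real.exp (8/(j:ℝ)^2) := by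
    rw [← Real.exp_add]; congr 1; ring
  have hp : 0 < 1 + 8/(j:ℝ)^2 := by positivity
  rw [fac_norm z j hj, he2]
  set E := Real.exp (8/(j:ℝ)^2)
  have hE : 0 < E := Real.exp_pos _
  rw [div_le_iff₀ (by linarith), mul_div_assoc', div_mul_eq_mul_div, le_div_iff₀ (by linarith)]
  calc ‖Complex.I * z - lamM j‖ * (j:ℝ)^2 ≤ (E * ‖w' - nuC j‖) * (E * ‖lamM j‖) := by
        apply mul_le_mul
        · exact h.trans (by gcongr)
        · exact hle.trans (by gcongr)
        · positivity
        · positivity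
    _ = _ := by ring

lemma fac_lower (z : ℂ) (j : ℤ) (hj : j ≠ 0)
    (h : ‖Complex.I * z - nuC j‖ ≤ (1 + 8/(j:ℝ)^2) * ‖Complex.I * z - lamM j‖) :
    ‖Complex.I * z - nuC j‖/(j:ℝ)^2 ≤ Real.exp (16/(j:ℝ)^2) * ‖facC z j‖ := by
  have h4 := sq_ge_one hj
  have hl := lam_norm_ge j hj
  have hle := lam_le_sq j hj
  have he : 1 + 8/(j:ℝ)^2 ≤ Real.exp (8/(j:ℝ)^2) := by
    have := Real.add_one_le_exp (8/(j:ℝ)^2); linarith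
  have he2 : Real.exp (16/(j:ℝ)^2) = Real.exp (8/(j:ℝ)^2) * Real.exp (8/(j:ℝ)^2) := by
    rw [← Real.exp_add]; congr 1; ring
  have hp : 0 < 1 + 8/(j:ℝ)^2 := by positivity
  rw [fac_norm z j hj, he2]
  set E := Real.exp (8/(j:ℝ)^2)
  have hE : 0 < E := Real.exp_pos _
  rw [div_le_iff₀ (by linarith), mul_div_assoc', div_mul_eq_mul_div, le_div_iff₀ (by linarith)]
  calc ‖Complex.I * z - nuC j‖ * ‖lamM j‖ ≤ (E * ‖Complex.I * z - lamM j‖) * (E * (j:ℝ)^2) := by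
        apply mul_le_mul
        · exact h.trans (by gcongr)
        · exact hle.trans (by gcongr)
        · positivity
        · positivity
    _ = _ := by ring

/-- paired comparator -/
noncomputable def tpair (w : ℂ) (n : ℕ) : ℝ :=
  (‖w - nuC ((n:ℤ)+1)‖/((n:ℝ)+1)^2) * (‖w - nuC (-((n:ℤ)+1))‖/((n:ℝ)+1)^2)

noncomputable def fpair (z : ℂ) (n : ℕ) : ℝ := ‖facC z ((n:ℤ)+1)‖ * ‖facC z (-((n:ℤ)+1))‖

noncomputable def KK : ℝ := Real.exp (∑' n : ℕ, 32/((n:ℝ)+1)^2)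

lemma KK_pos : 0 < KK := Real.exp_pos _

lemma prod_cmp (f g : ℕ → ℝ) (hf : ∀ n, 0 ≤ f n) (hg : ∀ n, 0 ≤ g n)
    (h : ∀ n : ℕ, f n ≤ Real.exp (32/((n:ℝ)+1)^2) * g n) (N : ℕ) :
    ∏ n ∈ Finset.range N, f n ≤ KK * ∏ n ∈ Finset.range N, g n := by
  have hs : Summable (fun n : ℕ => 32/((n:ℝ)+1)^2) := by
    have := (summable_nat_add_iff 1).mpr (Real.summable_one_div_nat_pow.mpr (by norm_num : 1 < 2))
    have := this.mul_left 32
    refine this.congr fun n => ?_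
    push_cast; ring
  calc ∏ n ∈ Finset.range N, f n ≤ ∏ n ∈ Finset.range N, (Real.exp (32/((n:ℝ)+1)^2) * g n) :=
        Finset.prod_le_prod (fun n _ => hf n) (fun n _ => h n)
    _ = Real.exp (∑ n ∈ Finset.range N, 32/((n:ℝ)+1)^2) * ∏ n ∈ Finset.range N, g n := by
        rw [Finset.prod_mul_distrib, Real.exp_sum]
    _ ≤ _ := by
        apply mul_le_mul_of_nonneg_right _ (Finset.prod_nonneg fun n _ => hg n)
        exact Real.exp_le_exp.mpr (hs.sum_le_tsum _ (fun n _ => by positivity))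

lemma tpair_nonneg (w : ℂ) (n : ℕ) : 0 ≤ tpair w n := by unfold tpair; positivity
lemma fpair_nonneg (w : ℂ) (n : ℕ) : 0 ≤ fpair w n := by unfold fpair; positivity

lemma exp_split (n : ℕ) : Real.exp (32/((n:ℝ)+1)^2) =
    Real.exp (16/((n:ℝ)+1)^2) * Real.exp (16/((n:ℝ)+1)^2) := by
  rw [← Real.exp_add]; congr 1; ring

lemma pair_upper (z w' : ℂ)
    (h : ∀ j : ℤ, j ≠ 0 → ‖Complex.I * z - lamM j‖ ≤ (1 + 8/(j:ℝ)^2) * ‖w' - nuC j‖) (N : ℕ) :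
    ∏ n ∈ Finset.range N, fpair z n ≤ KK * ∏ n ∈ Finset.range N, tpair w' n := by
  apply prod_cmp _ _ (fpair_nonneg z) (tpair_nonneg w')
  intro n
  have h1 := fac_upper z w' ((n:ℤ)+1) (by omega) (h _ (by omega))
  have h2 := fac_upper z w' (-((n:ℤ)+1)) (by omega) (h _ (by omega))
  push_cast at h1 h2
  rw [neg_sq] at h2
  rw [fpair, tpair, exp_split]
  refine (mul_le_mul h1 h2 (norm_nonneg _) (by positivity)).trans (le_of_eq (by ring))

lemma pair_lower (z : ℂ)
    (h : ∀ j : ℤ, j ≠ 0 →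
      ‖Complex.I * z - nuC j‖ ≤ (1 + 8/(j:ℝ)^2) * ‖Complex.I * z - lamM j‖) (N : ℕ) :
    ∏ n ∈ Finset.range N, tpair (Complex.I * z) n ≤ KK * ∏ n ∈ Finset.range N, fpair z n := by
  apply prod_cmp _ _ (tpair_nonneg _) (fpair_nonneg z)
  intro n
  have h1 := fac_lower z ((n:ℤ)+1) (by omega) (h _ (by omega))
  have h2 := fac_lower z (-((n:ℤ)+1)) (by omega) (h _ (by omega))
  push_cast at h1 h2
  rw [neg_sq] at h2
  rw [fpair, tpair, exp_split]
  refine (mul_le_mul h1 h2 (by positivity) (by positivity)).trans (le_of_eq (by ring))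

open Filter Topology in
lemma tpair_tendsto (s : ℂ) :
    Tendsto (fun N : ℕ => π^2 * ‖s^2 - 1/4‖ * ∏ n ∈ Finset.range N, tpair (s^2) n) atTop
      (𝓝 (‖Complex.sinh (π * (s - 1/2))‖ * ‖Complex.sinh (π * (s + 1/2))‖)) := by
  have h1 := (Complex.tendsto_euler_sin_prod ((s - 1/2) * Complex.I)).norm
  have h2 := (Complex.tendsto_euler_sin_prod ((s + 1/2) * Complex.I)).norm
  have h := h1.mul h2
  rw [← mul_assoc, Complex.sin_mul_I, ← mul_assoc, Complex.sin_mul_I] at h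
  simp only [norm_mul, Complex.norm_I, mul_one] at h
  refine h.congr fun N => ?_
  have hp : ‖(π:ℂ)‖ = π := by rw [Complex.norm_real, Real.norm_eq_abs, abs_of_pos Real.pi_pos]
  have hq : ‖s^2 - 1/4‖ = ‖s - 1/2‖ * ‖s + 1/2‖ := by rw [← norm_mul]; congr 1; ring
  have hr : ∏ n ∈ Finset.range N, tpair (s^2) n =
      ‖∏ j ∈ Finset.range N, (1 - ((s - 1/2) * Complex.I)^2 / ((j:ℂ) + 1)^2)‖ *
      ‖∏ j ∈ Finset.range N, (1 - ((s + 1/2) * Complex.I)^2 / ((j:ℂ) + 1)^2)‖ := by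
    rw [← norm_mul, ← Finset.prod_mul_distrib, norm_prod]
    refine Finset.prod_congr rfl fun n _ => ?_
    have hn : ((n:ℂ)+1) ≠ 0 := by exact_mod_cast Nat.succ_ne_zero n
    have hc : ((n:ℝ)+1)^2 = ‖((n:ℂ)+1)^2‖ := by
      rw [norm_pow, show ((n:ℂ)+1) = (((n:ℝ)+1 : ℝ):ℂ) by push_cast; rfl, Complex.norm_real,
        Real.norm_eq_abs, sq_abs]
    rw [tpair, hc, ← norm_div, ← norm_div, ← norm_mul]
    congr 1
    simp only [nuC]
    push_cast
    field_simp
    ring_nf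
    have h4 : Complex.I^4 = 1 := Complex.I_pow_four
    simp only [h4, Complex.I_sq]
    ring
  rw [hp, hq, hr]; ring

lemma fac_summable (z : ℂ) :
    Summable (fun k : {k : ℤ // k ≠ 0} => ‖z / (Complex.I * lamM k.1)‖) := by
  have h := ((Real.summable_one_div_int_pow (p := 2)).mpr (by norm_num)).mul_left (2 * ‖z‖)
  refine Summable.of_nonneg_of_le (fun _ => norm_nonneg _) (fun k => ?_) (h.subtype {k : ℤ | k ≠ 0})
  have h1 := lam_norm_ge k.1 k.2
  have h2 := sq_ge_one k.2
  simp only [norm_div, norm_mul, Complex.norm_I, one_mul, Function.comp]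
  rw [mul_one_div, div_le_div_iff₀ (by linarith) (by linarith)]
  nlinarith [norm_nonneg z]

lemma fac_multipliable (z : ℂ) :
    Multipliable (fun k : {k : ℤ // k ≠ 0} => 1 + z / (Complex.I * lamM k.1)) :=
  multipliable_one_add_of_summable (fac_summable z)

open Filter Topology in
lemma fpair_tendsto (z : ℂ) :
    Tendsto (fun N : ℕ => ‖z‖ * ∏ n ∈ Finset.range N, fpair z n) atTop (𝓝 ‖P₂ z‖) := by
  have h : HasProd (fun k : {k : ℤ // k ≠ 0} => facC z k.1)
      (∏' k : {k : ℤ // k ≠ 0}, (1 + z / (Complex.I * lamM k.1))) := (fac_multipliable z).hasProd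
  have h' : HasProd (facC z) (∏' k : {k : ℤ // k ≠ 0}, (1 + z / (Complex.I * lamM k.1))) := by
    refine (hasProd_subtype_iff_of_mulSupport_subset (s := {k : ℤ | k ≠ 0}) ?_).mp h
    intro k hk h0
    have h0 : k = 0 := h0
    subst h0
    exact hk (fac_zero z)
  have h2 := h'.nat_mul_neg.tendsto_prod_nat
  rw [fac_zero, mul_one] at h2
  have h3 := ((h2.comp (tendsto_add_atTop_nat 1)).norm).const_mul ‖z‖
  rw [P₂, norm_mul]
  refine h3.congr fun N => ?_
  simp only [Function.comp, Finset.prod_range_succ', norm_prod, norm_mul]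
  simp [fac_zero, fpair]

lemma P2_diff : Differentiable ℂ P₂ := by
  unfold P₂
  refine differentiable_id.mul ?_
  intro z
  have hs := fac_summable ((‖z‖ + 1 : ℝ) : ℂ)
  have hl := Summable.hasProdLocallyUniformlyOn_one_add (R := ℂ)
    (f := fun (k : {k : ℤ // k ≠ 0}) (x : ℂ) => x / (Complex.I * lamM k.1))
    (K := Metric.ball 0 (‖z‖+1)) Metric.isOpen_ball hs
    (Filter.Eventually.of_forall fun k x hx => by
      rw [norm_div, norm_div]
      gcongr
      rw [Complex.norm_real, Real.norm_eq_abs, abs_of_nonneg (by positivity)]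
      exact (mem_ball_zero_iff.mp hx).le)
    (fun k => by fun_prop)
  have hd := hl.differentiableOn (Filter.Eventually.of_forall fun s => by fun_prop) Metric.isOpen_ball
  exact hd.differentiableAt (Metric.isOpen_ball.mem_nhds (by simp))

lemma norm_sinh_le (u : ℂ) : ‖Complex.sinh u‖ ≤ Real.exp |u.re| := by
  rw [Complex.sinh, norm_div]
  have h1 : ‖Complex.exp u - Complex.exp (-u)‖ ≤ Real.exp |u.re| + Real.exp |u.re| := by
    refine (norm_sub_le _ _).trans ?_
    rw [Complex.norm_exp, Complex.norm_exp, Complex.neg_re]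
    gcongr
    · exact le_abs_self _
    · exact neg_le_abs _
  have : ‖(2:ℂ)‖ = 2 := by simp
  rw [this]; linarith

lemma norm_sinh_ge (u : ℂ) (hu : 1/2 ≤ u.re) : Real.exp u.re / 4 ≤ ‖Complex.sinh u‖ := by
  rw [Complex.sinh, norm_div]
  have h1 := norm_sub_norm_le (Complex.exp u) (Complex.exp (-u))
  rw [Complex.norm_exp, Complex.norm_exp, Complex.neg_re] at h1
  have : ‖(2:ℂ)‖ = 2 := by simp
  rw [this]
  have h2 : 2 * Real.exp (-u.re) ≤ Real.exp u.re := by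
    have h3 : Real.exp u.re = Real.exp (2 * u.re) * Real.exp (-u.re) := by
      rw [← Real.exp_add]; congr 1; ring
    rw [h3]
    gcongr
    have := Real.add_one_le_exp (2 * u.re)
    linarith
  linarith

open Filter Topology in
lemma upper_bound (z s : ℂ) (hz : 1 ≤ ‖z‖) (hs : ‖s^2‖ = ‖z‖)
    (h : ∀ j : ℤ, j ≠ 0 → ‖Complex.I * z - lamM j‖ ≤ (1 + 8/(j:ℝ)^2) * ‖s^2 - nuC j‖) :
    ‖P₂ z‖ ≤ 2 * KK * Real.exp π * Real.exp (2 * π * |s.re|) := by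
  have hK := KK_pos
  have h1 := fpair_tendsto z
  have h2 := (tpair_tendsto s).const_mul (2 * KK)
  have hlim := le_of_tendsto_of_tendsto' h1 h2 (fun N => by
    have hN := pair_upper z (s^2) h N
    have hT : 0 ≤ ∏ n ∈ Finset.range N, tpair (s^2) n :=
      Finset.prod_nonneg fun n _ => tpair_nonneg _ n
    have hq : ‖z‖ ≤ 2 * ‖s^2 - 1/4‖ := by
      have := norm_sub_norm_le (s^2) (1/4)
      rw [hs] at this
      norm_num at this ⊢
      linarith
    have hpi : 1 ≤ π^2 := by nlinarith [Real.pi_gt_three]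
    calc ‖z‖ * ∏ n ∈ Finset.range N, fpair z n
        ≤ (2 * ‖s^2 - 1/4‖) * (KK * ∏ n ∈ Finset.range N, tpair (s^2) n) := by
          apply mul_le_mul hq hN (Finset.prod_nonneg fun n _ => fpair_nonneg _ n) (by positivity)
      _ = 1 * (2 * KK * (‖s^2 - 1/4‖ * ∏ n ∈ Finset.range N, tpair (s^2) n)) := by ring
      _ ≤ π^2 * (2 * KK * (‖s^2 - 1/4‖ * ∏ n ∈ Finset.range N, tpair (s^2) n)) := by
          gcongr
      _ = _ := by ring)
  refine hlim.trans ?_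
  rw [mul_assoc (2*KK)]
  refine mul_le_mul_of_nonneg_left ?_ (by positivity)
  have e1 : ‖Complex.sinh (π * (s - 1/2))‖ ≤ Real.exp (π * (|s.re| + 1/2)) := by
    refine (norm_sinh_le _).trans (Real.exp_le_exp.mpr ?_)
    rw [Complex.re_ofReal_mul, abs_mul, abs_of_pos Real.pi_pos]
    gcongr
    refine (abs_sub _ _).trans ?_
    norm_num
  have e2 : ‖Complex.sinh (π * (s + 1/2))‖ ≤ Real.exp (π * (|s.re| + 1/2)) := by
    refine (norm_sinh_le _).trans (Real.exp_le_exp.mpr ?_)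
    rw [Complex.re_ofReal_mul, abs_mul, abs_of_pos Real.pi_pos]
    gcongr
    refine (abs_add_le _ _).trans ?_
    norm_num
  refine (mul_le_mul e1 e2 (norm_nonneg _) (Real.exp_pos _).le).trans (le_of_eq ?_)
  rw [← Real.exp_add, ← Real.exp_add]; congr 1; ring

lemma nu_re (w : ℂ) (j : ℤ) : w.re + (j:ℝ)^2 - 1/4 ≤ ‖w - nuC j‖ := by
  have h := (le_abs_self _).trans (Complex.abs_re_le_norm (w - nuC j))
  have h2 : (nuC j).re = -((j:ℝ)^2) + 1/4 := by
    rw [nuC, Complex.add_re, Complex.ofReal_re, Complex.re_ofReal_mul, Complex.I_re]; ring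
  rw [Complex.sub_re, h2] at h
  linarith

lemma cmp_of_add {A B J : ℝ} (hJ : 1 ≤ J) (h1 : A ≤ B + 4 / 2) (h2 : J / 4 ≤ B) :
    A ≤ (1 + 8 / J) * B := by
  have : 2 ≤ 8 / J * B := by
    rw [div_mul_eq_mul_div, le_div_iff₀ (by linarith)]; linarith
  linarith

lemma cmp_a (z : ℂ) (j : ℤ) (hj : j ≠ 0) :
    ‖Complex.I * z - lamM j‖ ≤ (1 + 8/(j:ℝ)^2) * ‖((Real.sqrt ‖z‖ : ℝ):ℂ)^2 - nuC j‖ := by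
  have h4 := sq_ge_one hj
  have hs : ((Real.sqrt ‖z‖ : ℝ):ℂ)^2 = ((‖z‖ : ℝ) : ℂ) := by
    rw [← Complex.ofReal_pow, Real.sq_sqrt (norm_nonneg z)]
  rw [hs]
  have h1 := nu_re ((‖z‖ : ℝ) : ℂ) j
  rw [Complex.ofReal_re] at h1
  have h2 := norm_sub_le (Complex.I * z) (lamM j)
  rw [norm_mul, Complex.norm_I, one_mul] at h2
  have h3 := lam_norm_le j hj
  have h0 := norm_nonneg z
  have : 5/2 ≤ 8/(j:ℝ)^2 * ‖((‖z‖ : ℝ) : ℂ) - nuC j‖ := by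
    rw [div_mul_eq_mul_div, le_div_iff₀ (by linarith)]; linarith
  linarith

lemma cmp_b (w : ℂ) (hw : 0 ≤ w.re) (j : ℤ) (hj : j ≠ 0) :
    ‖w - lamM j‖ ≤ (1 + 8/(j:ℝ)^2) * ‖w - nuC j‖ := by
  have h4 := sq_ge_one hj
  have h1 := nu_re w j
  have h2 := norm_sub_le_norm_sub_add_norm_sub w (nuC j) (lamM j)
  have h3 := lam_sub_nu j hj
  rw [norm_sub_rev] at h3
  exact cmp_of_add h4 (by linarith) (by linarith)

lemma abs_ge_three {k : ℤ} (h0 : 2 ≤ |k|) (h2 : k ≠ 2) (h3 : k ≠ -2) : 3 ≤ |k| := by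
  rcases abs_cases k with h | h <;> omega

lemma lamP_dist (k : ℤ) (hk : 3 ≤ |k|) (j : ℤ) (hj : j ≠ 0) :
    (j:ℝ)^2/4 ≤ ‖lamP k - lamM j‖ := by
  obtain ⟨b, hb1, hb2, -, hP⟩ := lam_large k (by omega)
  have hre := (neg_le_abs _).trans (Complex.abs_re_le_norm (lamP k - lamM j))
  have hre' := (le_abs_self _).trans (Complex.abs_re_le_norm (lamP k - lamM j))
  have him := Complex.abs_im_le_norm (lamP k - lamM j)
  have kre : (lamP k).re = -b := by
    rw [hP, Complex.add_re, Complex.ofReal_re, Complex.re_ofReal_mul, Complex.I_re]; ring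
  have kim : (lamP k).im = k := by
    rw [hP, Complex.add_im, Complex.ofReal_im, Complex.im_ofReal_mul, Complex.I_im]; ring
  rw [Complex.sub_re, kre] at hre hre'
  rw [Complex.sub_im, kim] at him
  rcases int_cases j hj with h | h
  · have hj1 : (j:ℝ)^2 = 1 := by exact_mod_cast h
    have : (lamM j).re = -1/2 := by
      rw [(lam_small j h).1, Complex.add_re, Complex.ofReal_re, Complex.re_ofReal_mul,
        Complex.I_re]; ring
    linarith
  · obtain ⟨c, hc1, hc2, hM, -⟩ := lam_large j h
    have jre : (lamM j).re = -((j:ℝ)^2 - c) := by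
      rw [hM, Complex.add_re, Complex.ofReal_re, Complex.re_ofReal_mul, Complex.I_re]; ring
    have jim : (lamM j).im = j := by
      rw [hM, Complex.add_im, Complex.ofReal_im, Complex.im_ofReal_mul, Complex.I_im]; ring
    rcases eq_or_lt_of_le h with h | h
    · have hj4 : (j:ℝ)^2 = 4 := by
        have : j^2 = 4 := by rw [← sq_abs, ← h]; norm_num
        exact_mod_cast this
      have hkj : (1:ℝ) ≤ |(k:ℝ) - j| := by
        have : 1 ≤ |k - j| := by
          have := abs_sub_abs_le_abs_sub k j
          omega
        exact_mod_cast this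
      rw [jim] at him
      linarith
    · have hj9 : (9:ℝ) ≤ (j:ℝ)^2 := by
        have h : (3:ℝ) ≤ |(j:ℝ)| := by exact_mod_cast h
        rw [← sq_abs]; nlinarith
      rw [jre] at hre'
      linarith

open Filter Topology in
lemma lower_bound (k : ℤ) (hk : 3 ≤ |k|) :
    Real.exp (Real.sqrt 2 * π * Real.sqrt |(k:ℝ)|) * Real.exp (-(2*π)) ≤
      (32 * π^2 * KK) * ‖P₂ (-(Complex.I * lamP k))‖ := by
  have hK := KK_pos
  set z := -(Complex.I * lamP k) with hz
  have hw : Complex.I * z = lamP k := by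
    rw [hz, mul_neg, ← mul_assoc, Complex.I_mul_I]; ring
  have hzn : ‖z‖ = ‖lamP k‖ := by rw [hz, norm_neg, norm_mul, Complex.norm_I, one_mul]
  obtain ⟨b, hb1, hb2, -, hP⟩ := lam_large k (by omega)
  have kre : (lamP k).re = -b := by
    rw [hP, Complex.add_re, Complex.ofReal_re, Complex.re_ofReal_mul, Complex.I_re]; ring
  have kim : (lamP k).im = k := by
    rw [hP, Complex.add_im, Complex.ofReal_im, Complex.im_ofReal_mul, Complex.I_im]; ring
  have hkr : (3:ℝ) ≤ |(k:ℝ)| := by exact_mod_cast hk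
  have hn : |(k:ℝ)| ≤ ‖lamP k‖ := by rw [← kim]; exact Complex.abs_im_le_norm _
  obtain ⟨s, hs, hs0⟩ : ∃ s : ℂ, s^2 = lamP k ∧ 0 ≤ s.re := by
    obtain ⟨s, hs⟩ := IsAlgClosed.exists_pow_nat_eq (lamP k) (n := 2) (by norm_num)
    rcases le_total 0 s.re with h | h
    · exact ⟨s, hs, h⟩
    · exact ⟨-s, by rw [neg_sq, hs], by rw [Complex.neg_re]; linarith⟩
  have hσ : (|(k:ℝ)| - 2) / 2 ≤ s.re^2 := by
    have e1 : s.re^2 - s.im^2 = -b := by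
      rw [← kre, ← hs, sq s, Complex.mul_re]; ring
    have e2 : s.re^2 + s.im^2 = ‖lamP k‖ := by
      rw [← hs, norm_pow, Complex.sq_norm, Complex.normSq_apply]; ring
    linarith
  have hσ7 : 0.7 ≤ s.re := by nlinarith
  have hσk : Real.sqrt 2 * Real.sqrt |(k:ℝ)| ≤ 2 * (s.re + 1) := by
    rw [← Real.sqrt_mul (by norm_num)]
    apply Real.sqrt_le_iff.mpr
    constructor
    · linarith
    · nlinarith
  have hcmp : ∀ j : ℤ, j ≠ 0 →
      ‖Complex.I * z - nuC j‖ ≤ (1 + 8/(j:ℝ)^2) * ‖Complex.I * z - lamM j‖ := by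
    intro j hj
    rw [hw]
    have h2 := norm_sub_le_norm_sub_add_norm_sub (lamP k) (lamM j) (nuC j)
    have h3 := lam_sub_nu j hj
    exact cmp_of_add (sq_ge_one hj) (by linarith) (lamP_dist k hk j hj)
  have h1 := (fpair_tendsto z).const_mul (2 * π^2 * KK)
  have h2 := tpair_tendsto s
  have hlim := le_of_tendsto_of_tendsto' h2 h1 (fun N => by
    have hN := pair_lower z hcmp N
    rw [hw] at hN
    rw [hs]
    have hq : ‖lamP k - 1/4‖ ≤ 2 * ‖z‖ := by
      have := norm_sub_le (lamP k) (1/4)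
      rw [hzn]
      norm_num at this ⊢
      linarith
    calc π^2 * ‖lamP k - 1/4‖ * ∏ n ∈ Finset.range N, tpair (lamP k) n
        ≤ (π^2 * (2 * ‖z‖)) * (KK * ∏ n ∈ Finset.range N, fpair z n) := by
          apply mul_le_mul (by gcongr) hN (Finset.prod_nonneg fun n _ => tpair_nonneg _ n)
            (by positivity)
      _ = _ := by ring)
  have hpi := Real.pi_gt_three
  have r1 : ((π:ℂ) * (s - 1/2)).re = π * (s.re - 1/2) := by
    rw [Complex.re_ofReal_mul]; norm_num
  have r2 : ((π:ℂ) * (s + 1/2)).re = π * (s.re + 1/2) := by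
    rw [Complex.re_ofReal_mul]; norm_num
  have e1 := norm_sinh_ge (π * (s - 1/2)) (by rw [r1]; nlinarith)
  have e2 := norm_sinh_ge (π * (s + 1/2)) (by rw [r2]; nlinarith)
  rw [r1] at e1
  rw [r2] at e2
  have e3 := (mul_le_mul e1 e2 (by positivity) (norm_nonneg _)).trans hlim
  have e4 : Real.exp (π * (s.re - 1/2)) / 4 * (Real.exp (π * (s.re + 1/2)) / 4) =
      Real.exp (2 * π * s.re) / 16 := by
    rw [show 2 * π * s.re = π * (s.re - 1/2) + π * (s.re + 1/2) by ring, Real.exp_add]; ring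
  rw [e4] at e3
  have e5 : Real.exp (Real.sqrt 2 * π * Real.sqrt |(k:ℝ)|) * Real.exp (-(2*π)) ≤
      Real.exp (2 * π * s.re) := by
    rw [← Real.exp_add, Real.exp_le_exp]
    nlinarith
  linarith

lemma P2_ne (k : ℤ) (hk : k^2 = 1) : P₂ (-(Complex.I * lamP k)) ≠ 0 := by
  have hP := (lam_small k hk).2
  have hk1 : (k:ℝ)^2 = 1 := by exact_mod_cast hk
  obtain ⟨h1, h2⟩ := sqrt3_bds
  have kre : (lamP k).re = -1/2 := by
    rw [hP, Complex.add_re, Complex.ofReal_re, Complex.re_ofReal_mul, Complex.I_re]; ring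
  have kim : (lamP k).im = k + Real.sqrt 3 / 2 := by
    rw [hP, Complex.add_im, Complex.ofReal_im, Complex.im_ofReal_mul, Complex.I_im]; ring
  have hne : ∀ j : ℤ, j ≠ 0 → lamP k ≠ lamM j := by
    intro j hj heq
    rcases int_cases j hj with h | h
    · have jim : (lamM j).im = j - Real.sqrt 3 / 2 := by
        rw [(lam_small j h).1, Complex.add_im, Complex.ofReal_im, Complex.im_ofReal_mul,
          Complex.I_im]; ring
      rw [← heq, kim] at jim
      have hlt1 : ((1:ℤ):ℝ) < ((j - k : ℤ) : ℝ) := by push_cast; linarith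
      have hlt2 : ((j - k : ℤ) : ℝ) < ((2:ℤ):ℝ) := by push_cast; linarith
      have a1 : 1 < j - k := by exact_mod_cast hlt1
      have a2 : j - k < 2 := by exact_mod_cast hlt2
      omega
    · have := lam_re j hj
      have h4 := sq_ge_four h
      rw [← heq, kre] at this
      linarith
  rw [P₂]
  apply mul_ne_zero
  · apply neg_ne_zero.mpr
    apply mul_ne_zero Complex.I_ne_zero
    intro h0
    rw [h0] at kre
    norm_num at kre
  · apply tprod_one_add_ne_zero_of_summable _ (fac_summable _)
    intro j h0
    have hf := fac_norm (-(Complex.I * lamP k)) j.1 j.2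
    rw [facC, h0, norm_zero] at hf
    have hl := norm_pos_iff.mpr (lam_ne j.1 j.2)
    rw [eq_comm, div_eq_zero_iff] at hf
    rcases hf with hf | hf
    · rw [norm_eq_zero, mul_neg, ← mul_assoc, Complex.I_mul_I, sub_eq_zero] at hf
      exact hne j.1 j.2 (by rw [← hf]; ring)
    · exact hl.ne' hf

lemma sqrt_Ix (x : ℝ) : ∃ s : ℂ, s^2 = Complex.I * x ∧ 2 * |s.re| = Real.sqrt 2 * Real.sqrt |x| := by
  have hq : Real.sqrt 2 * Real.sqrt |x| = 2 * Real.sqrt (|x|/2) := by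
    rw [← Real.sqrt_mul (by norm_num)]
    rw [show 2 * |x| = 2^2 * (|x|/2) by ring, Real.sqrt_mul (by norm_num), Real.sqrt_sq (by norm_num)]
  have hsq : ((Real.sqrt (|x|/2) : ℝ) : ℂ)^2 = ((|x|/2 : ℝ) : ℂ) := by
    rw [← Complex.ofReal_pow, Real.sq_sqrt (by positivity)]
  rcases le_total 0 x with h | h
  · refine ⟨(Real.sqrt (|x|/2) : ℝ) * (1 + Complex.I), ?_, ?_⟩
    · rw [mul_pow, hsq, abs_of_nonneg h]; push_cast; ring_nf; rw [Complex.I_sq]; ring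
    · rw [Complex.re_ofReal_mul, hq]; simp; positivity
  · refine ⟨(Real.sqrt (|x|/2) : ℝ) * (1 - Complex.I), ?_, ?_⟩
    · rw [mul_pow, hsq, abs_of_nonpos h]; push_cast; ring_nf; rw [Complex.I_sq]; ring
    · rw [Complex.re_ofReal_mul, hq]; simp; positivity

/-- **Estimates on the canonical product `P₂` over the parabolic branch:** the product
converges, `P₂` is entire with `|P₂(z)| ≤ C e^{2π√|z|}` on ℂ, `|P₂(x)| ≤ C e^{√2 π √|x|}`
on ℝ, and `|P₂(-iλ_k⁺)| ≥ c e^{√2 π √|k|}` for `k ∉ {0, ±2}`. -/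
theorem parabolic_canonical_product_estimates :
    (∀ z : ℂ, Multipliable (fun k : {k : ℤ // k ≠ 0} => 1 + z / (Complex.I * lamM k.1))) ∧
    Differentiable ℂ P₂ ∧
    ∃ C > (0:ℝ), ∃ c > (0:ℝ),
      -- (a) global growth bound of order 1/2
      (∀ z : ℂ, ‖P₂ z‖ ≤ C * Real.exp (2 * π * Real.sqrt ‖z‖)) ∧
      -- (b) growth bound on the real axis
      (∀ x : ℝ, ‖P₂ (x:ℂ)‖ ≤ C * Real.exp (Real.sqrt 2 * π * Real.sqrt |x|)) ∧
      -- (c) lower bound at the points -iλ_k⁺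
      (∀ k : ℤ, k ≠ 0 → k ≠ 2 → k ≠ -2 →
        c * Real.exp (Real.sqrt 2 * π * Real.sqrt |(k:ℝ)|)
          ≤ ‖P₂ (-(Complex.I * lamP k))‖) := by
  obtain ⟨M, hM⟩ : ∃ M : ℝ, ∀ z ∈ Metric.closedBall (0:ℂ) 1, ‖P₂ z‖ ≤ M :=
    (isCompact_closedBall (0:ℂ) 1).exists_bound_of_continuousOn P2_diff.continuous.continuousOn
  have hM0 : 0 ≤ M := (norm_nonneg _).trans (hM 0 (by simp))
  have hK := KK_pos
  have hE := Real.exp_pos π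
  have hC0 : 0 < 2 * KK * Real.exp π := by positivity
  have hp1 := norm_pos_iff.mpr (P2_ne 1 (by norm_num))
  have hp2 := norm_pos_iff.mpr (P2_ne (-1) (by norm_num))
  have hsmall : ∀ (z : ℂ) (t : ℝ), ‖z‖ ≤ 1 → 0 ≤ t →
      ‖P₂ z‖ ≤ (M + 2 * KK * Real.exp π) * Real.exp t := by
    intro z t hz ht
    have h1 := hM z (by simpa using hz)
    have h2 := Real.one_le_exp ht
    nlinarith
  have hbig : ∀ t : ℝ, 2 * KK * Real.exp π * Real.exp t ≤
      (M + 2 * KK * Real.exp π) * Real.exp t := by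
    intro t
    have := Real.exp_pos t
    nlinarith
  set e0 := Real.exp (Real.sqrt 2 * π * Real.sqrt |((1:ℤ):ℝ)|) with he0
  have he0p : 0 < e0 := Real.exp_pos _
  have he0' : Real.exp (Real.sqrt 2 * π * Real.sqrt |((-1:ℤ):ℝ)|) = e0 := by
    rw [he0]; norm_num
  refine ⟨fac_multipliable, P2_diff, M + 2 * KK * Real.exp π, by positivity,
    min (Real.exp (-(2*π)) / (32 * π^2 * KK))
      (min (‖P₂ (-(Complex.I * lamP 1))‖ / e0) (‖P₂ (-(Complex.I * lamP (-1)))‖ / e0)),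
    by have := Real.pi_pos; positivity, ?_, ?_, ?_⟩
  · intro z
    rcases le_total ‖z‖ 1 with h | h
    · exact hsmall z _ h (by positivity)
    · have hs : ‖((Real.sqrt ‖z‖ : ℝ):ℂ)^2‖ = ‖z‖ := by
        rw [← Complex.ofReal_pow, Real.sq_sqrt (norm_nonneg z), Complex.norm_real, norm_norm]
      have := upper_bound z (Real.sqrt ‖z‖ : ℝ) h hs (cmp_a z)
      rw [Complex.ofReal_re, abs_of_nonneg (Real.sqrt_nonneg _)] at this
      exact this.trans (hbig _)
  · intro x
    rcases le_total ‖(x:ℂ)‖ 1 with h | h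
    · exact hsmall x _ h (by positivity)
    · obtain ⟨s, hs, hs2⟩ := sqrt_Ix x
      have := upper_bound x s h (by rw [hs, norm_mul, Complex.norm_I, one_mul])
        (by rw [hs]; exact cmp_b _ (by simp))
      rw [show 2 * π * |s.re| = Real.sqrt 2 * π * Real.sqrt |x| by linear_combination π * hs2] at this
      exact this.trans (hbig _)
  · intro k hk0 hk2 hk2'
    set m := min (Real.exp (-(2*π)) / (32 * π^2 * KK))
      (min (‖P₂ (-(Complex.I * lamP 1))‖ / e0) (‖P₂ (-(Complex.I * lamP (-1)))‖ / e0))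
    have m1 : m ≤ Real.exp (-(2*π)) / (32 * π^2 * KK) := min_le_left _ _
    have m2 : m ≤ ‖P₂ (-(Complex.I * lamP 1))‖ / e0 := (min_le_right _ _).trans (min_le_left _ _)
    have m3 : m ≤ ‖P₂ (-(Complex.I * lamP (-1)))‖ / e0 :=
      (min_le_right _ _).trans (min_le_right _ _)
    rcases int_cases k hk0 with h | h
    · rcases (show k = 1 ∨ k = -1 by simpa using h) with h | h
      · subst h
        rwa [le_div_iff₀ he0p] at m2
      · subst h
        rw [he0']
        rwa [le_div_iff₀ he0p] at m3
    · have hl := lower_bound k (abs_ge_three h hk2 hk2')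
      have hpos : 0 < 32 * π^2 * KK := by have := Real.pi_pos; positivity
      rw [le_div_iff₀ hpos] at m1
      have h3 := Real.exp_pos (Real.sqrt 2 * π * Real.sqrt |(k:ℝ)|)
      refine le_of_mul_le_mul_left (le_trans ?_ hl) hpos
      nlinarith
end
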